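/- arXiv:2206.00889 — 5 statements merged into one kernel-verified Lean document; each statement's English description precedes it below -/
import Mathlib

section
/- For every D > 0 and c > 0 there exist a constant δ > 0 and a threshold n₀ = n₀(c, D) such that the following holds for all n ≥ n₀. Let A ⊆ ℝ² be a set of n points in convex position, and let E be a set of unordered pairs of distinct points of A with |E| ≥ cn² such that the pairs in E determine at most Dn distinct directions. Then there exist a subset H ⊆ E with |H| ≥ δn² and a nonzero real polynomial in two variables of total degree at most 2 vanishing at every point of A that belongs to some pair of H (i.e., all points occurring in the pairs of H lie on one common, possibly degenerate, conic). -/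
/-!
The proof lifts pairs of points to lines of `ℝ³` and finds a regulus.

Enumerate `A` counterclockwise as `a 0, …, a (n-1)`. Chords `(i, j)`, `i < j`, with equal directed
direction are nested, so along them `j - i` is monotone. As there are `≥ c n²` chords and `≤ D n`
directions, most chords `(i, j)` of `E` have a parallel partner `(i + s, j - t)` with `0 < s, t < K`,
where `K` depends on `c` and `D` only (`card_isolated_le`). Fixing the most popular `s`, `t` and
residues of `i`, `j` modulo `K` leaves a dense bipartite graph `Γ` of pairs `(i, j)` with
`a i - a j` parallel to `a (i + s) - a (j - t)` (`exists_shift_graph`).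

Send `(p, p')` to the line of `ℝ³` through `(p, 0)` and `(p', 1)`. Two such lines are coplanar iff
`p - q` and `p' - q'` are parallel, so an edge of `Γ` says that the line of `(a i, a (i + s))`
meets the line of `(a j, a (j - t))`. Equal residues make the chords `(i, i')` and
`(i + s, i' + s)` cross or share an endpoint, hence lines of the same family are pairwise skew.
Three lines of the first family with many common neighbours span a regulus containing these
neighbours, and every line of the first family with three of these neighbours lies in the opposite
ruling. The trace of the regulus on `z = 0` is a conic through all the points `a i`, `a j` concerned
(`regDet_eq_zero_of_meet`, `regDet_eq_zero_of_opposite`). Applying Cauchy–Schwarz three times chooses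
the three lines so that a positive proportion of the edges survives (`exists_three_rows`).
-/

/-- Points of the Euclidean plane. -/
abbrev Pt : Type := ℝ × ℝ

/-- A finite set of points is in convex position: every point of it lies outside the convex
hull of the remaining points (i.e. all points are extreme points of the convex hull). -/
def ConvexPosition (A : Finset Pt) : Prop :=
  ∀ a ∈ A, a ∉ convexHull ℝ ((A : Set Pt) \ {a})

/-- A set of points lies on a (possibly degenerate) conic: there is a nonzero real
polynomial in two variables of total degree at most `2` vanishing on all of them. -/
def OnConic (S : Set Pt) : Prop :=
  ∃ f : MvPolynomial (Fin 2) ℝ, f ≠ 0 ∧ f.totalDegree ≤ 2 ∧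
    ∀ p ∈ S, MvPolynomial.eval ![p.1, p.2] f = 0

/-- The set of directions (one-dimensional linear subspaces of `ℝ²`) determined by a set
`E` of (two-element) pairs of points. -/
def directionsOf (E : Finset (Finset Pt)) : Set (Submodule ℝ Pt) :=
  {d | ∃ e ∈ E, ∃ p ∈ e, ∃ q ∈ e, p ≠ q ∧ d = Submodule.span ℝ {q - p}}

/-! ### Counterclockwise enumeration of a set in convex position -/

/-- The planar cross product (determinant) of two vectors. -/
def cr (v w : Pt) : ℝ := v.1 * w.2 - v.2 * w.1

/-- Twice the signed area of the triangle `p q r`. -/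
def orient (p q r : Pt) : ℝ := cr (q - p) (r - p)

/-- The vector is lexicographically positive. -/
def LexPos (v : Pt) : Prop := 0 < v.1 ∨ (v.1 = 0 ∧ 0 < v.2)

/-- A real-valued monotone substitute for the angle of a lexicographically positive vector. -/
noncomputable def angKey (v : Pt) : ℝ := v.2 / (v.1 + |v.2|)

lemma lexPos_den {v : Pt} (hv : LexPos v) : 0 < v.1 + |v.2| := by
  rcases hv with h | ⟨h, h'⟩
  · positivity
  · rw [h, zero_add]; positivity

lemma lexPos_fst {v : Pt} (hv : LexPos v) : 0 ≤ v.1 := by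
  rcases hv with h | ⟨h, _⟩
  · exact h.le
  · exact h.ge

lemma angKey_lt {v w : Pt} (hv : LexPos v) (hw : LexPos w) (h : angKey v < angKey w) :
    0 < cr v w := by
  have dv := lexPos_den hv
  have dw := lexPos_den hw
  unfold angKey at h
  rw [div_lt_div_iff₀ dv dw] at h
  have v1 := lexPos_fst hv
  have w1 := lexPos_fst hw
  unfold cr
  rcases abs_cases v.2 with ⟨e, e'⟩ | ⟨e, e'⟩ <;> rcases abs_cases w.2 with ⟨f, f'⟩ | ⟨f, f'⟩ <;>
    rw [e, f] at h
  · nlinarith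
  · nlinarith
  · rcases hw with hw | ⟨hw, hw'⟩
    · nlinarith
    · rcases hv with hv | ⟨hv, hv'⟩
      · nlinarith
      · linarith
  · nlinarith

lemma angKey_eq {v w : Pt} (hv : LexPos v) (hw : LexPos w) (h : angKey v = angKey w) :
    ∃ t : ℝ, 0 < t ∧ w = t • v := by
  have dv := lexPos_den hv
  have dw := lexPos_den hw
  refine ⟨(w.1 + |w.2|) / (v.1 + |v.2|), by positivity, ?_⟩
  unfold angKey at h
  have h2 : w.2 = (w.1 + |w.2|) / (v.1 + |v.2|) * v.2 := by
    field_simp at h ⊢; linarith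
  have h3 : |w.2| = (w.1 + |w.2|) / (v.1 + |v.2|) * |v.2| := by
    conv_lhs => rw [h2, abs_mul, abs_of_pos (by positivity)]
  have h1 : w.1 = (w.1 + |w.2|) / (v.1 + |v.2|) * v.1 := by
    have : (w.1 + |w.2|) / (v.1 + |v.2|) * (v.1 + |v.2|) = w.1 + |w.2| := by field_simp
    linarith
  exact Prod.ext h1 h2

/-- No point of the set lies in the triangle spanned by three others; `q = s` is allowed. -/
lemma ConvexPosition.not_combo {A : Finset Pt} (hA : ConvexPosition A) {o q r s : Pt}
    (ho : o ∈ A) (hq : q ∈ A) (hr : r ∈ A) (hs : s ∈ A) (hro : r ≠ o) (hrq : r ≠ q) (hrs : r ≠ s)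
    {l m : ℝ} (hl : 0 ≤ l) (hm : 0 ≤ m) (hlm : l + m ≤ 1)
    (h : r - o = l • (q - o) + m • (s - o)) : False := by
  apply hA r hr
  have e : r = (1 - l - m) • o + l • q + m • s := by
    have : r = o + (r - o) := by abel
    rw [this, h]; module
  have c := convex_convexHull ℝ ((A : Set Pt) \ {r})
  have mem : ∀ x ∈ A, r ≠ x → x ∈ convexHull ℝ ((A : Set Pt) \ {r}) := fun x hx hne =>
    subset_convexHull ℝ _ ⟨hx, fun h => hne h.symm⟩
  have := c.sum_mem (t := Finset.univ) (w := ![1 - l - m, l, m]) (z := ![o, q, s])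
    (by intro i _; fin_cases i <;> simp <;> linarith)
    (by simp [Fin.sum_univ_three]; ring)
    (by intro i _; fin_cases i
        · exact mem o ho hro
        · exact mem q hq hrq
        · exact mem s hs hrs)
  rw [Fin.sum_univ_three] at this
  simp only [Matrix.cons_val_zero, Matrix.cons_val_one, Matrix.cons_val] at this
  rw [← e] at this
  exact this

lemma exists_sorted_enum (A : Finset Pt) (κ : Pt → ℝ) (hκ : Set.InjOn κ A) :
    ∃ a : ℕ → Pt, (∀ i < A.card, a i ∈ A) ∧ (∀ p ∈ A, ∃ i < A.card, a i = p) ∧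
      ∀ i j, i < j → j < A.card → κ (a i) < κ (a j) := by
  have hc : (A.image κ).card = A.card := Finset.card_image_of_injOn hκ
  let e := (A.image κ).orderEmbOfFin hc
  have hm : ∀ i, ∃ p ∈ A, κ p = e i := fun i =>
    Finset.mem_image.1 ((A.image κ).orderEmbOfFin_mem hc i)
  choose f hf hfe using hm
  refine ⟨fun i => if h : i < A.card then f ⟨i, h⟩ else 0, ?_, ?_, ?_⟩
  · intro i hi; simp only [hi, dite_true]; exact hf _
  · intro p hp
    have : κ p ∈ Set.range e := by
      rw [Finset.range_orderEmbOfFin]; exact Finset.mem_coe.2 (Finset.mem_image_of_mem _ hp)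
    obtain ⟨i, hi⟩ := this
    refine ⟨i, i.2, ?_⟩
    simp only [i.2, dite_true]
    exact hκ (hf _) hp ((hfe _).trans hi)
  · intro i j hij hj
    simp only [hj, hij.trans hj, dite_true, hfe]
    exact e.strictMono hij

/-- Counterclockwise enumeration of a set in convex position. -/
lemma ConvexPosition.exists_enum {A : Finset Pt} (hA : ConvexPosition A) :
    ∃ a : ℕ → Pt, (∀ i < A.card, a i ∈ A) ∧ (∀ p ∈ A, ∃ i < A.card, a i = p) ∧
      (∀ i j, i < j → j < A.card → a i ≠ a j) ∧
      ∀ i j k, i < j → j < k → k < A.card → 0 < orient (a i) (a j) (a k) := by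
  rcases A.eq_empty_or_nonempty with rfl | hne
  · exact ⟨fun _ => 0, by simp⟩
  obtain ⟨o, ho, hmin⟩ := A.exists_min_image (fun p => toLex p) hne
  have pos : ∀ q ∈ A, q ≠ o → LexPos (q - o) := by
    intro q hq hqo
    have h1 := hmin q hq
    have h2 : toLex o < toLex q := lt_of_le_of_ne h1 (fun h => hqo (toLex.injective h).symm)
    rw [Prod.Lex.toLex_lt_toLex] at h2
    rcases h2 with h | ⟨h, h'⟩
    · left; simpa using h
    · right; exact ⟨by simp [h], by simpa using h'⟩
  have key1 : ∀ v, LexPos v → -2 < angKey v := by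
    intro v hv
    have := lexPos_den hv
    have v1 := lexPos_fst hv
    unfold angKey
    rw [lt_div_iff₀ this]
    linarith [neg_abs_le v.2, abs_nonneg v.2]
  let κ : Pt → ℝ := fun p => if p = o then -2 else angKey (p - o)
  have hinj : ∀ q ∈ A, ∀ r ∈ A, q ≠ o → r ≠ o → angKey (q - o) = angKey (r - o) → q = r := by
    intro q hq r hr hqo hro he
    by_contra hqr
    obtain ⟨t, ht, h⟩ := angKey_eq (pos q hq hqo) (pos r hr hro) he
    rcases le_total t 1 with h1 | h1
    · exact hA.not_combo ho hq hr hq hro (Ne.symm hqr) (Ne.symm hqr) ht.le le_rfl (by linarith)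
        (by rw [h]; simp)
    · refine hA.not_combo ho hr hq hr hqo hqr hqr (l := t⁻¹) (m := 0) (by positivity) le_rfl
        (by rw [add_zero]; exact inv_le_one_of_one_le₀ h1) ?_
      rw [h, smul_smul, inv_mul_cancel₀ ht.ne']; simp
  have hκ : Set.InjOn κ A := by
    intro q hq r hr h
    simp only [κ] at h
    split_ifs at h with h1 h2 h2
    · rw [h1, h2]
    · have := key1 _ (pos r hr h2); linarith
    · have := key1 _ (pos q hq h1); linarith
    · exact hinj q hq r hr h1 h2 h
  obtain ⟨a, h1, h2, h3⟩ := exists_sorted_enum A κ hκ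
  have h4 : ∀ i j, i < j → j < A.card → a i ≠ a j := fun i j hij hj h => by
    have := h3 i j hij hj; rw [h] at this; exact lt_irrefl _ this
  refine ⟨a, h1, h2, h4, ?_⟩
  -- only the first point can be the base point `o`
  have h5 : ∀ i j, i < j → j < A.card → a j ≠ o := by
    intro i j hij hj hjo
    have := h3 i j hij hj
    have e : κ (a j) = -2 := by simp [κ, hjo]
    rw [e] at this
    by_cases hio : a i = o
    · exact h4 i j hij hj (hio.trans hjo.symm)
    · have e' : κ (a i) = angKey (a i - o) := by simp [κ, hio]
      have := key1 _ (pos _ (h1 i (hij.trans hj)) hio); linarith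
  have h6 : ∀ i j, i < j → j < A.card → a i ≠ o → 0 < cr (a i - o) (a j - o) := by
    intro i j hij hj hio
    have hjo := h5 i j hij hj
    apply angKey_lt (pos _ (h1 i (hij.trans hj)) hio) (pos _ (h1 j hj) hjo)
    have := h3 i j hij hj
    simpa [κ, hio, hjo] using this
  intro i j k hij hjk hk
  have hj := hjk.trans hk
  have hi := hij.trans hj
  by_cases hio : a i = o
  · unfold orient; rw [hio]
    exact h6 j k hjk hk (h5 i j hij hj)
  have hjo := h5 i j hij hj
  have hko := h5 j k hjk hk
  have c1 := h6 i j hij hj hio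
  have c2 := h6 j k hjk hk hjo
  have c3 := h6 i k (hij.trans hjk) hk hio
  by_contra hcon
  have hsum : cr (a i - o) (a j - o) + cr (a j - o) (a k - o) ≤ cr (a i - o) (a k - o) := by
    have : orient (a i) (a j) (a k) = cr (a i - o) (a j - o) + cr (a j - o) (a k - o) -
        cr (a i - o) (a k - o) := by simp [orient, cr]; ring
    linarith
  refine hA.not_combo ho (h1 i hi) (h1 j hj) (h1 k hk) hjo (h4 i j hij hj).symm
    (h4 j k hjk hk) (l := cr (a j - o) (a k - o) / cr (a i - o) (a k - o))
    (m := cr (a i - o) (a j - o) / cr (a i - o) (a k - o)) (by positivity) (by positivity)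
    (by rw [← add_div, div_le_one c3]; linarith) ?_
  -- Cramer's rule
  have c3' := c3.ne'
  generalize a i - o = u at *
  generalize a j - o = v at *
  generalize a k - o = w at *
  ext
  · simp only [Prod.fst_add, Prod.smul_fst, smul_eq_mul]
    field_simp
    simp only [cr]; ring
  · simp only [Prod.snd_add, Prod.smul_snd, smul_eq_mul]
    field_simp
    simp only [cr]; ring

/-! ### Lines of `ℝ³`, reguli and conics -/

/-- For pairs `(p, p')`, `(q, q')` of points of the plane, this vanishes iff `p - q` and `p' - q'`
are parallel, i.e. iff the line of `ℝ³` through `(p, 0)`, `(p', 1)` and the line through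
`(q, 0)`, `(q', 1)` are coplanar. -/
def meet (p p' q q' : Pt) : ℝ := cr (p - q) (p' - q')

/-- Plücker-type coordinates of the pair `(p, p')`; `meet` is a bilinear form in them. -/
def plu (p p' : Pt) : Fin 6 → ℝ := ![1, p.1, p.2, p'.1, p'.2, cr p p']

/-- The determinant expressing that the three lines through `p₁'`, `p₂'`, `p₃'` with directions
`p₁ - b`, `p₂ - b`, `p₃ - b` are concurrent. As a function of `b` it is the equation of the conic
cut out in the plane `z = 0` by the regulus of transversals of the three lines `(pᵤ, pᵤ')`. -/
def regDet (p₁ p₁' p₂ p₂' p₃ p₃' b : Pt) : ℝ :=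
  Matrix.det !![p₁.1 - b.1, p₁.2 - b.2, cr (p₁ - b) p₁';
                p₂.1 - b.1, p₂.2 - b.2, cr (p₂ - b) p₂';
                p₃.1 - b.1, p₃.2 - b.2, cr (p₃ - b) p₃']

/-- Although `regDet` looks cubic in `b`, its cubic terms cancel. -/
lemma regDet_quadratic (p₁ p₁' p₂ p₂' p₃ p₃' : Pt) : ∃ c₀ c₁ c₂ c₃ c₄ c₅ : ℝ, ∀ b : Pt,
    regDet p₁ p₁' p₂ p₂' p₃ p₃' b =
      c₀ + c₁ * b.1 + c₂ * b.2 + c₃ * b.1 ^ 2 + c₄ * (b.1 * b.2) + c₅ * b.2 ^ 2 := by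
  -- the coefficients, by interpolation
  let F := regDet p₁ p₁' p₂ p₂' p₃ p₃'
  refine ⟨F (0, 0), (F (1, 0) - F (-1, 0)) / 2, (F (0, 1) - F (0, -1)) / 2,
    (F (1, 0) + F (-1, 0)) / 2 - F (0, 0), F (1, 1) - F (1, 0) - F (0, 1) + F (0, 0),
    (F (0, 1) + F (0, -1)) / 2 - F (0, 0), ?_⟩
  rintro ⟨b, d⟩
  simp only [F, regDet, Matrix.det_fin_three, cr, Matrix.of_apply, Matrix.cons_val',
    Matrix.cons_val, Matrix.cons_val_zero, Matrix.cons_val_one, Prod.fst_sub, Prod.snd_sub]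
  ring

lemma onConic_of_quadratic {S : Set Pt} {c₀ c₁ c₂ c₃ c₄ c₅ : ℝ} (F : Pt → ℝ)
    (hF : ∀ b : Pt, F b =
      c₀ + c₁ * b.1 + c₂ * b.2 + c₃ * b.1 ^ 2 + c₄ * (b.1 * b.2) + c₅ * b.2 ^ 2)
    (hne : ∃ b, F b ≠ 0) (hS : ∀ b ∈ S, F b = 0) : OnConic S := by
  classical
  let f : MvPolynomial (Fin 2) ℝ := MvPolynomial.C c₀ + MvPolynomial.C c₁ * MvPolynomial.X 0 +
    MvPolynomial.C c₂ * MvPolynomial.X 1 + MvPolynomial.C c₃ * MvPolynomial.X 0 ^ 2 +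
    MvPolynomial.C c₄ * (MvPolynomial.X 0 * MvPolynomial.X 1) +
    MvPolynomial.C c₅ * MvPolynomial.X 1 ^ 2
  have hf : ∀ b : Pt, MvPolynomial.eval ![b.1, b.2] f = F b := by
    intro b; rw [hF]; simp [f]
  refine ⟨f, ?_, ?_, fun b hb => (hf b).trans (hS b hb)⟩
  · rintro h0
    obtain ⟨b, hb⟩ := hne
    rw [← hf, h0] at hb
    simp at hb
  · have hC : ∀ (c : ℝ) (g : MvPolynomial (Fin 2) ℝ), g.totalDegree ≤ 2 →
        (MvPolynomial.C c * g).totalDegree ≤ 2 := fun c g hg => by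
      refine (MvPolynomial.totalDegree_mul _ _).trans ?_
      simpa using hg
    have hX : ∀ i j : Fin 2, (MvPolynomial.X i * MvPolynomial.X j :
        MvPolynomial (Fin 2) ℝ).totalDegree ≤ 2 := fun i j => by
      refine (MvPolynomial.totalDegree_mul _ _).trans ?_
      simp
    have hA : ∀ g h : MvPolynomial (Fin 2) ℝ, g.totalDegree ≤ 2 → h.totalDegree ≤ 2 →
        (g + h).totalDegree ≤ 2 := fun g h hg hh =>
      (MvPolynomial.totalDegree_add _ _).trans (max_le hg hh)
    refine hA _ _ (hA _ _ (hA _ _ (hA _ _ (hA _ _ ?_ ?_) ?_) ?_) ?_) ?_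
    · simp
    · exact hC _ _ (by simp)
    · exact hC _ _ (by simp)
    · exact hC _ _ (by rw [sq]; exact hX _ _)
    · exact hC _ _ (hX _ _)
    · exact hC _ _ (by rw [sq]; exact hX _ _)

/-- The conic is not the whole plane as soon as two of the three lines are skew and the `pᵤ` are not
collinear. -/
lemma regDet_ne_zero {p₁ p₁' p₂ p₂' p₃ p₃' : Pt} (h : orient p₁ p₂ p₃ ≠ 0)
    (h12 : meet p₁ p₁' p₂ p₂' ≠ 0) : ∃ b, regDet p₁ p₁' p₂ p₂' p₃ p₃' b ≠ 0 := by
  -- evaluate at the midpoint of `p₁ p₂`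
  refine ⟨((p₁.1 + p₂.1) / 2, (p₁.2 + p₂.2) / 2), ?_⟩
  have : regDet p₁ p₁' p₂ p₂' p₃ p₃' ((p₁.1 + p₂.1) / 2, (p₁.2 + p₂.2) / 2) =
      orient p₁ p₂ p₃ * meet p₁ p₁' p₂ p₂' / 4 := by
    simp only [regDet, Matrix.det_fin_three, cr, Matrix.of_apply, Matrix.cons_val',
      Matrix.cons_val, Matrix.cons_val_zero, Matrix.cons_val_one, Prod.fst_sub, Prod.snd_sub,
      orient, meet]
    ring
  rw [this]
  exact div_ne_zero (mul_ne_zero h h12) (by norm_num)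

/-- The foot of a common transversal lies on the conic. -/
lemma regDet_eq_zero_of_meet {p₁ p₁' p₂ p₂' p₃ p₃' q q' : Pt}
    (h1 : meet p₁ p₁' q q' = 0) (h2 : meet p₂ p₂' q q' = 0) (h3 : meet p₃ p₃' q q' = 0) :
    regDet p₁ p₁' p₂ p₂' p₃ p₃' q = 0 := by
  apply Matrix.exists_mulVec_eq_zero_iff.1
  refine ⟨![q'.2, -q'.1, -1], fun h => by simpa using congrFun h 2, ?_⟩
  simp only [meet, cr, Prod.fst_sub, Prod.snd_sub] at h1 h2 h3
  ext i
  fin_cases i <;> simp [Matrix.mulVec, dotProduct, Fin.sum_univ_three, cr] <;> linarith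

/-- The foot of a line of the opposite ruling lies on the same conic: if `β₁, β₂, β₃` are
pairwise skew transversals of `p₁, p₂, p₃`, then every transversal `q` of the `βᵥ` depends linearly
on `p₁, p₂, p₃` in Plücker coordinates. -/
lemma regDet_eq_zero_of_opposite {p₁ p₁' p₂ p₂' p₃ p₃' q q' : Pt} {β β' : Fin 3 → Pt}
    (hβ : ∀ v w, v ≠ w → meet (β v) (β' v) (β w) (β' w) ≠ 0)
    (h1 : ∀ v, meet p₁ p₁' (β v) (β' v) = 0) (h2 : ∀ v, meet p₂ p₂' (β v) (β' v) = 0)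
    (h3 : ∀ v, meet p₃ p₃' (β v) (β' v) = 0) (hq : ∀ v, meet q q' (β v) (β' v) = 0) :
    regDet p₁ p₁' p₂ p₂' p₃ p₃' q = 0 := by
  -- seven vectors of a six-dimensional space are dependent
  let V : Fin 7 → (Fin 6 → ℝ) := ![plu p₁ p₁', plu p₂ p₂', plu p₃ p₃', plu q q',
    plu (β 0) (β' 0), plu (β 1) (β' 1), plu (β 2) (β' 2)]
  have hdep : ¬ LinearIndependent ℝ V := fun h => by
    have := h.fintype_card_le_finrank
    simp at this
  obtain ⟨g, hg, k, hk⟩ := Fintype.not_linearIndependent_iff.1 hdep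
  have hc : ∀ m : Fin 6, g 0 * plu p₁ p₁' m + g 1 * plu p₂ p₂' m + g 2 * plu p₃ p₃' m +
      g 3 * plu q q' m + g 4 * plu (β 0) (β' 0) m + g 5 * plu (β 1) (β' 1) m +
      g 6 * plu (β 2) (β' 2) m = 0 := by
    intro m
    have := congrFun hg m
    simpa [Fin.sum_univ_succ, V, ← add_assoc] using this
  have e0 := hc 0
  have e1 := hc 1
  have e2 := hc 2
  have e3 := hc 3
  have e4 := hc 4
  have e5 := hc 5
  simp only [plu, Matrix.cons_val, Matrix.cons_val_zero, Matrix.cons_val_one] at e0 e1 e2 e3 e4 e5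
  -- pairing the relation with an arbitrary pair `(r, r')`
  have hpair : ∀ r r' : Pt, g 0 * meet p₁ p₁' r r' + g 1 * meet p₂ p₂' r r' +
      g 2 * meet p₃ p₃' r r' + g 3 * meet q q' r r' + g 4 * meet (β 0) (β' 0) r r' +
      g 5 * meet (β 1) (β' 1) r r' + g 6 * meet (β 2) (β' 2) r r' = 0 := by
    intro r r'
    simp only [cr] at e5
    simp only [meet, cr, Prod.fst_sub, Prod.snd_sub]
    linear_combination e5 + (r.1 * r'.2 - r.2 * r'.1) * e0 - r'.2 * e1 + r'.1 * e2 +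
      r.2 * e3 - r.1 * e4
  have symm : ∀ v w, meet (β v) (β' v) (β w) (β' w) = meet (β w) (β' w) (β v) (β' v) := by
    intro v w; simp only [meet, cr, Prod.fst_sub, Prod.snd_sub]; ring
  have self : ∀ v, meet (β v) (β' v) (β v) (β' v) = 0 := by
    intro v; simp [meet, cr]
  have f0 := hpair (β 0) (β' 0)
  have f1 := hpair (β 1) (β' 1)
  have f2 := hpair (β 2) (β' 2)
  rw [h1, h2, h3, hq, self, symm 1 0, symm 2 0] at f0
  rw [h1, h2, h3, hq, self, symm 2 1] at f1
  rw [h1, h2, h3, hq, self] at f2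
  have n01 := hβ 0 1 (by decide)
  have n02 := hβ 0 2 (by decide)
  have n12 := hβ 1 2 (by decide)
  generalize meet (β 0) (β' 0) (β 1) (β' 1) = x at *
  generalize meet (β 0) (β' 0) (β 2) (β' 2) = y at *
  generalize meet (β 1) (β' 1) (β 2) (β' 2) = z at *
  have g4 : g 4 = 0 := by
    -- the symmetric matrix with zero diagonal and off-diagonal entries `x, y, z` is invertible
    have : (2 * x * y) * g 4 = 0 := by linear_combination y * f1 + x * f2 - z * f0
    simpa [n01, n02] using this
  have g5 : g 5 = 0 := by
    have : z * g 5 = 0 := by rw [g4] at f2; linarith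
    simpa [n12] using this
  have g6 : g 6 = 0 := by
    have : z * g 6 = 0 := by rw [g4] at f1; linarith
    simpa [n12] using this
  rw [g4, g5, g6] at e0 e1 e2 e3 e4 e5
  apply Matrix.exists_vecMul_eq_zero_iff.1
  refine ⟨![g 0, g 1, g 2], fun h => ?_, ?_⟩
  · have i0 : g 0 = 0 := by simpa using congrFun h 0
    have i1 : g 1 = 0 := by simpa using congrFun h 1
    have i2 : g 2 = 0 := by simpa using congrFun h 2
    have i3 : g 3 = 0 := by rw [i0, i1, i2] at e0; linarith
    fin_cases k <;> simp_all
  · ext i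
    simp only [cr] at e5
    fin_cases i <;> simp [Matrix.vecMul, dotProduct, Fin.sum_univ_three, cr]
    · linear_combination e1 - q.1 * e0
    · linear_combination e2 - q.2 * e0
    · linear_combination e5 - q.1 * e4 + q.2 * e3

/-! ### Parallel chords of a convex polygon -/

section Chords

variable {a : ℕ → Pt} {n : ℕ}

/-- Crossing chords are not parallel. -/
lemma cr_crossing (ho : ∀ i j k, i < j → j < k → k < n → 0 < orient (a i) (a j) (a k))
    {i k j l : ℕ} (h1 : i < k) (h2 : k < j) (h3 : j < l) (h4 : l < n) :
    0 < cr (a j - a i) (a l - a k) := by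
  have e1 := ho i k j h1 h2 (h3.trans h4)
  have e2 := ho i j l (h1.trans h2) h3 h4
  have : cr (a j - a i) (a l - a k) = orient (a i) (a k) (a j) + orient (a i) (a j) (a l) := by
    simp only [orient, cr, Prod.fst_sub, Prod.snd_sub]; ring
  linarith

lemma cr_consecutive (ho : ∀ i j k, i < j → j < k → k < n → 0 < orient (a i) (a j) (a k))
    {i j k : ℕ} (h1 : i < j) (h2 : j < k) (h3 : k < n) :
    0 < cr (a j - a i) (a k - a j) := by
  have e1 := ho i j k h1 h2 h3
  have : cr (a j - a i) (a k - a j) = orient (a i) (a j) (a k) := by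
    simp only [orient, cr, Prod.fst_sub, Prod.snd_sub]; ring
  linarith

lemma cr_shift (ho : ∀ i j k, i < j → j < k → k < n → 0 < orient (a i) (a j) (a k))
    {i j s : ℕ} (hs : 0 < s) (hij : i + s ≤ j) (hj : j + s < n) :
    0 < cr (a j - a i) (a (j + s) - a (i + s)) := by
  rcases hij.eq_or_lt with rfl | h
  · exact cr_consecutive ho (by omega) (by omega) hj
  · exact cr_crossing ho (by omega) h (by omega) hj

/-- Shifting a chord by at most its length yields a chord that crosses it or shares an endpoint
with it, hence is not parallel to it. -/
lemma meet_shift_ne (ho : ∀ i j k, i < j → j < k → k < n → 0 < orient (a i) (a j) (a k))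
    {i j s : ℕ} (hs : 0 < s) (hij : i + s ≤ j ∨ j + s ≤ i) (hi : i + s < n) (hj : j + s < n) :
    meet (a i) (a (i + s)) (a j) (a (j + s)) ≠ 0 := by
  rcases hij with h | h
  · have := cr_shift ho hs h hj
    simp only [meet, cr, Prod.fst_sub, Prod.snd_sub] at this ⊢
    linarith
  · have := cr_shift ho hs h hi
    simp only [meet, cr, Prod.fst_sub, Prod.snd_sub] at this ⊢
    linarith

lemma meet_swap (p p' q q' : Pt) : meet p p' q q' = - meet p' p q' q := by
  simp only [meet, cr, Prod.fst_sub, Prod.snd_sub]; ring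

/-- Distinct chords with equal directed direction are nested. Separated parallel chords
`i < j < i' < j'` are excluded since they point in opposite directions. -/
lemma nested_of_parallel (ho : ∀ i j k, i < j → j < k → k < n → 0 < orient (a i) (a j) (a k))
    {i j i' j' : ℕ} (hij : i < j) (hj : j < n) (hij' : i' < j') (hj' : j' < n)
    (hii : i < i' ∨ (i = i' ∧ j ≠ j')) {r : ℝ} (hr : 0 < r)
    (h : a j' - a i' = r • (a j - a i)) : i < i' ∧ j' < j := by
  have hx : cr (a j - a i) (a j' - a i') = 0 := by
    rw [h]; simp only [cr, Prod.smul_fst, Prod.smul_snd, smul_eq_mul]; ring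
  rcases hii with hii | ⟨rfl, hjj⟩
  · refine ⟨hii, ?_⟩
    by_contra hcon
    rcases (not_lt.1 hcon).eq_or_lt with rfl | hjj
    · have := ho i i' j hii hij' hj
      simp only [orient, cr, Prod.fst_sub, Prod.snd_sub] at this hx
      linarith
    rcases lt_trichotomy i' j with hc | rfl | hc
    · exact (cr_crossing ho hii hc hjj hj').ne' hx
    · exact (cr_consecutive ho hij hij' hj').ne' hx
    · have h1 := cr_consecutive ho hij hc (hij'.trans hj')
      have h2 := cr_consecutive ho hc hij' hj'
      rw [h] at h2
      have : cr (a i' - a j) (r • (a j - a i)) = - r * cr (a j - a i) (a i' - a j) := by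
        simp only [cr, Prod.smul_fst, Prod.smul_snd, smul_eq_mul]; ring
      rw [this] at h2
      nlinarith
  · exfalso
    rcases lt_or_gt_of_ne hjj with hl | hl
    · have := ho i j j' hij hl hj'
      rw [orient, hx] at this; exact lt_irrefl _ this
    · have := ho i j' j hij' hl hj
      simp only [orient, cr, Prod.fst_sub, Prod.snd_sub] at this hx
      linarith

end Chords

lemma same_ray {v w : Pt} (hv : v ≠ 0) (hw : w ≠ 0)
    (h : Submodule.span ℝ {v} = Submodule.span ℝ {w}) (hp : LexPos v ↔ LexPos w) :
    ∃ r : ℝ, 0 < r ∧ w = r • v := by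
  have : w ∈ Submodule.span ℝ {v} := by rw [h]; exact Submodule.mem_span_singleton_self w
  obtain ⟨r, rfl⟩ := Submodule.mem_span_singleton.1 this
  refine ⟨r, ?_, rfl⟩
  by_contra hr
  have hr0 : r ≠ 0 := by rintro rfl; simp at hw
  have hr' : r < 0 := lt_of_le_of_ne (not_lt.1 hr) hr0
  obtain ⟨x, y⟩ := v
  simp only [LexPos, Prod.smul_mk, smul_eq_mul, mul_eq_zero, hr0, false_or] at hp
  simp only [mul_pos_iff, hr', hr'.not_gt, false_and, true_and, false_or] at hp
  rcases lt_trichotomy x 0 with hx | rfl | hx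
  · simp [hx, hx.ne, hx.not_gt] at hp
  · rcases lt_trichotomy y 0 with hy | rfl | hy
    · simp [hy, hy.not_gt] at hp
    · exact hv rfl
    · simp [hy, hy.not_gt] at hp
  · simp [hx, hx.ne', hx.not_gt] at hp

/-! ### Dense bipartite graphs -/

/-- Passing to the neighbourhood of a well-chosen row: by Cauchy–Schwarz some row `i₀` is such that
a positive proportion of all pairs of indices are entries of `Γ` in the columns of `i₀` but not in
the row `i₀` itself. -/
lemma exists_dense_row {η : ℝ} (hη : 0 < η) : ∃ N : ℕ, ∀ n ≥ N, ∀ Γ : Finset (ℕ × ℕ),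
    Γ ⊆ Finset.range n ×ˢ Finset.range n → η * (n : ℝ) ^ 2 ≤ Γ.card →
    ∃ i₀, η ^ 2 / 2 * (n : ℝ) ^ 2 ≤
      ((Γ.filter fun p => (i₀, p.2) ∈ Γ ∧ p.1 ≠ i₀).card : ℝ) := by
  refine ⟨⌈2 / η ^ 2⌉₊ + 1, fun n hn Γ hΓ hc => ?_⟩
  have hn1 : 1 ≤ n := by omega
  have hn0 : (0 : ℝ) < n := by exact_mod_cast hn1
  have hn2 : 2 / η ^ 2 ≤ n := (Nat.le_ceil _).trans (by exact_mod_cast (by omega))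
  have hn3 : 2 ≤ η ^ 2 * n := by rwa [div_le_iff₀' (by positivity)] at hn2
  have h2mem : ∀ p ∈ Γ, p.1 ∈ Finset.range n ∧ p.2 ∈ Finset.range n := fun p hp =>
    Finset.mem_product.1 (hΓ hp)
  let d : ℕ → ℕ := fun j => ((Finset.range n).filter fun i => (i, j) ∈ Γ).card
  have hd : ∀ j, (Γ.filter fun p => p.2 = j).card = d j := by
    intro j
    refine Finset.card_bij (fun p _ => p.1) ?_ ?_ ?_
    · rintro ⟨x, y⟩ hp
      simp only [Finset.mem_filter] at hp ⊢
      obtain ⟨hp, rfl⟩ := hp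
      exact ⟨(h2mem _ hp).1, hp⟩
    · rintro ⟨x, y⟩ hp ⟨z, w⟩ hq h
      simp only [Finset.mem_filter] at hp hq h
      rw [Prod.mk.injEq]; exact ⟨h, hp.2.trans hq.2.symm⟩
    · intro i hi
      simp only [Finset.mem_filter] at hi
      exact ⟨(i, j), by simp [hi.2], rfl⟩
  have hcard : Γ.card = ∑ j ∈ Finset.range n, d j := by
    rw [Finset.card_eq_sum_card_fiberwise (f := Prod.snd) (t := Finset.range n)
      (fun p hp => (h2mem p hp).2)]
    exact Finset.sum_congr rfl fun j _ => hd j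
  have hdouble : ∑ i ∈ Finset.range n, (Γ.filter fun p => (i, p.2) ∈ Γ).card =
      ∑ j ∈ Finset.range n, d j ^ 2 := by
    have := Finset.sum_card_bipartiteAbove_eq_sum_card_bipartiteBelow (s := Finset.range n)
      (t := Γ) (fun (i : ℕ) (p : ℕ × ℕ) => (i, p.2) ∈ Γ)
    simp only [Finset.bipartiteAbove, Finset.bipartiteBelow] at this
    rw [this, ← Finset.sum_fiberwise_of_maps_to (g := Prod.snd) (t := Finset.range n)
      (fun p hp => (h2mem p hp).2)]
    refine Finset.sum_congr rfl fun j _ => ?_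
    rw [Finset.sum_congr rfl (g := fun _ => d j)
      (fun p hp => by rw [(Finset.mem_filter.1 hp).2]), Finset.sum_const, hd, smul_eq_mul, sq]
  have hcs : (Γ.card : ℝ) ^ 2 ≤ n * ∑ j ∈ Finset.range n, (d j : ℝ) ^ 2 := by
    have := sq_sum_le_card_mul_sum_sq (s := Finset.range n) (f := fun j => (d j : ℝ))
    rw [Finset.card_range] at this
    rw [hcard]; push_cast; exact this
  have hex : ∃ i ∈ Finset.range n, η ^ 2 * (n : ℝ) ^ 2 ≤
      ((Γ.filter fun p => (i, p.2) ∈ Γ).card : ℝ) := by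
    apply Finset.exists_le_of_sum_le ⟨0, Finset.mem_range.2 hn1⟩
    rw [Finset.sum_const, Finset.card_range, nsmul_eq_mul]
    have h1 : (∑ i ∈ Finset.range n, ((Γ.filter fun p => (i, p.2) ∈ Γ).card : ℝ)) =
      ∑ j ∈ Finset.range n, (d j : ℝ) ^ 2 := by exact_mod_cast hdouble
    rw [h1]
    have h2 : (η * (n : ℝ) ^ 2) ^ 2 ≤ (Γ.card : ℝ) ^ 2 := by gcongr
    have h3 : n * (n * (η ^ 2 * (n : ℝ) ^ 2)) ≤ n * ∑ j ∈ Finset.range n, (d j : ℝ) ^ 2 := by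
      calc _ = (η * (n : ℝ) ^ 2) ^ 2 := by ring
        _ ≤ _ := h2.trans hcs
    exact le_of_mul_le_mul_left h3 hn0
  obtain ⟨i₀, -, hi⟩ := hex
  refine ⟨i₀, ?_⟩
  have hsplit : (Γ.filter fun p => (i₀, p.2) ∈ Γ).card ≤
      (Γ.filter fun p => (i₀, p.2) ∈ Γ ∧ p.1 ≠ i₀).card + n := by
    have hsub : (Γ.filter fun p => (i₀, p.2) ∈ Γ) ⊆
        (Γ.filter fun p => (i₀, p.2) ∈ Γ ∧ p.1 ≠ i₀) ∪
          (Finset.range n).image (fun j => (i₀, j)) := by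
      rintro ⟨x, y⟩ hp
      simp only [Finset.mem_filter, Finset.mem_union, Finset.mem_image] at hp ⊢
      by_cases hx : x = i₀
      · right; exact ⟨y, (h2mem _ hp.1).2, by rw [hx]⟩
      · left; exact ⟨hp.1, hp.2, hx⟩
    refine (Finset.card_le_card hsub).trans ((Finset.card_union_le _ _).trans ?_)
    gcongr
    exact Finset.card_image_le.trans (by simp)
  have hsplit' : ((Γ.filter fun p => (i₀, p.2) ∈ Γ).card : ℝ) ≤
      ((Γ.filter fun p => (i₀, p.2) ∈ Γ ∧ p.1 ≠ i₀).card : ℝ) + n := by exact_mod_cast hsplit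
  nlinarith

lemma injective_vec3 {x y z : ℕ} (hxy : x ≠ y) (hxz : x ≠ z) (hyz : y ≠ z) :
    Function.Injective ![x, y, z] := by
  intro v w h
  fin_cases v <;> fin_cases w <;> simp_all

/-- A dense bipartite graph contains three rows `i` and a still dense subgraph `Γ'` all of whose
columns are joined to the three rows, and each of whose rows is joined to three columns which are
themselves joined to the three rows. -/
lemma exists_three_rows {η : ℝ} (hη : 0 < η) : ∃ δ : ℝ, 0 < δ ∧ ∃ N : ℕ, ∀ n ≥ N,
    ∀ Γ : Finset (ℕ × ℕ), Γ ⊆ Finset.range n ×ˢ Finset.range n → η * (n : ℝ) ^ 2 ≤ Γ.card →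
    ∃ (i : Fin 3 → ℕ) (Γ' : Finset (ℕ × ℕ)), Function.Injective i ∧ Γ' ⊆ Γ ∧ Γ'.Nonempty ∧
      δ * (n : ℝ) ^ 2 ≤ Γ'.card ∧ ∀ p ∈ Γ', (∀ u, (i u, p.2) ∈ Γ) ∧
        ∃ j : Fin 3 → ℕ, Function.Injective j ∧ ∀ v, (p.1, j v) ∈ Γ ∧ ∀ u, (i u, j v) ∈ Γ := by
  classical
  let η₁ := η ^ 2 / 2
  let η₂ := η₁ ^ 2 / 2
  let η₃ := η₂ ^ 2 / 2
  have hη₁ : 0 < η₁ := by positivity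
  have hη₂ : 0 < η₂ := by positivity
  have hη₃ : 0 < η₃ := by positivity
  obtain ⟨N₁, hN₁⟩ := exists_dense_row hη
  obtain ⟨N₂, hN₂⟩ := exists_dense_row hη₁
  obtain ⟨N₃, hN₃⟩ := exists_dense_row hη₂
  refine ⟨η₃ / 2, by positivity, max (max N₁ N₂) (max N₃ (⌈4 / η₃⌉₊ + 1)),
    fun n hn Γ hΓ hc => ?_⟩
  simp only [ge_iff_le, max_le_iff] at hn
  obtain ⟨⟨hn1, hn2⟩, hn3, hn4⟩ := hn
  obtain ⟨i₁, h1⟩ := hN₁ n hn1 Γ hΓ hc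
  set Γ₁ := Γ.filter fun p => (i₁, p.2) ∈ Γ ∧ p.1 ≠ i₁ with hΓ₁
  have s1 : Γ₁ ⊆ Γ := Finset.filter_subset _ _
  obtain ⟨i₂, h2⟩ := hN₂ n hn2 Γ₁ (s1.trans hΓ) h1
  set Γ₂ := Γ₁.filter fun p => (i₂, p.2) ∈ Γ₁ ∧ p.1 ≠ i₂ with hΓ₂
  have s2 : Γ₂ ⊆ Γ₁ := Finset.filter_subset _ _
  obtain ⟨i₃, h3⟩ := hN₃ n hn3 Γ₂ (s2.trans (s1.trans hΓ)) h2
  set Γ₃ := Γ₂.filter fun p => (i₃, p.2) ∈ Γ₂ ∧ p.1 ≠ i₃ with hΓ₃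
  have s3 : Γ₃ ⊆ Γ₂ := Finset.filter_subset _ _
  have m3 : ∀ p ∈ Γ₃, (i₁, p.2) ∈ Γ ∧ (i₂, p.2) ∈ Γ₁ ∧ (i₃, p.2) ∈ Γ₂ := fun p hp =>
    ⟨(Finset.mem_filter.1 (s2 (s3 hp))).2.1, (Finset.mem_filter.1 (s3 hp)).2.1,
      (Finset.mem_filter.1 hp).2.1⟩
  have hn1' : 1 ≤ n := by omega
  have hn0 : (0 : ℝ) < n := by exact_mod_cast hn1'
  have hn5 : 4 / η₃ ≤ n := (Nat.le_ceil _).trans (by exact_mod_cast (by omega))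
  have hn6 : 4 ≤ η₃ * n := by rwa [div_le_iff₀' hη₃] at hn5
  let Γ' := Γ₃.filter fun p => 2 < (Γ₃.filter fun q => q.1 = p.1).card
  have hbad : (Γ₃.filter fun p => ¬ 2 < (Γ₃.filter fun q => q.1 = p.1).card).card ≤ 2 * n := by
    have := Finset.card_le_mul_card_image_of_maps_to
      (s := Γ₃.filter fun p => ¬ 2 < (Γ₃.filter fun q => q.1 = p.1).card)
      (t := Finset.range n) (f := Prod.fst)
      (fun p hp => (Finset.mem_product.1 (hΓ (s1 (s2 (s3 (Finset.mem_filter.1 hp).1))))).1) 2 ?_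
    · simpa using this
    · intro i _
      rcases (Finset.filter (fun p => p.1 = i)
        (Γ₃.filter fun p => ¬ 2 < (Γ₃.filter fun q => q.1 = p.1).card)).eq_empty_or_nonempty
        with he | ⟨p, hp⟩
      · rw [he]; simp
      · simp only [Finset.mem_filter] at hp
        obtain ⟨⟨hp1, hp2⟩, rfl⟩ := hp
        refine le_trans (Finset.card_le_card ?_) (not_lt.1 hp2)
        exact Finset.filter_subset_filter _ (Finset.filter_subset _ _)
  have hsum : Γ'.card +
      (Γ₃.filter fun p => ¬ 2 < (Γ₃.filter fun q => q.1 = p.1).card).card = Γ₃.card :=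
    Finset.card_filter_add_card_filter_not _
  have hsize : (Γ₃.card : ℝ) ≤ Γ'.card + 2 * n := by exact_mod_cast (by omega)
  have hfin : η₃ / 2 * (n : ℝ) ^ 2 ≤ Γ'.card := by
    have : η₃ * (n : ℝ) ^ 2 ≤ Γ₃.card := h3
    nlinarith
  have hne : Γ'.Nonempty := by
    rw [← Finset.card_pos]
    have : (0 : ℝ) < Γ'.card := lt_of_lt_of_le (by positivity) hfin
    exact_mod_cast this
  have hmem : ∀ p ∈ Γ', p ∈ Γ₃ := fun p hp => (Finset.mem_filter.1 hp).1
  have hrows : ∀ p ∈ Γ₃, ∀ u, ((![i₁, i₂, i₃] : Fin 3 → ℕ) u, p.2) ∈ Γ := by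
    intro p hp u
    obtain ⟨q1, q2, q3⟩ := m3 p hp
    fin_cases u
    · exact q1
    · exact s1 q2
    · exact s1 (s2 q3)
  refine ⟨![i₁, i₂, i₃], Γ', ?_, ?_, hne, hfin, ?_⟩
  · obtain ⟨p, hp⟩ := hne
    obtain ⟨q1, q2, q3⟩ := m3 p (hmem p hp)
    have n12 : i₂ ≠ i₁ := (Finset.mem_filter.1 q2).2.2
    have n13 : i₃ ≠ i₁ := (Finset.mem_filter.1 (s2 q3)).2.2
    have n23 : i₃ ≠ i₂ := (Finset.mem_filter.1 q3).2.2
    exact injective_vec3 n12.symm n13.symm n23.symm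
  · exact fun p hp => s1 (s2 (s3 (hmem p hp)))
  · intro p hp
    refine ⟨hrows p (hmem p hp), ?_⟩
    obtain ⟨x, hx, y, hy, z, hz, hxy, hxz, hyz⟩ := Finset.two_lt_card.1 (Finset.mem_filter.1 hp).2
    simp only [Finset.mem_filter] at hx hy hz
    have hxy' : x.2 ≠ y.2 := fun h => hxy (Prod.ext (hx.2.trans hy.2.symm) h)
    have hxz' : x.2 ≠ z.2 := fun h => hxz (Prod.ext (hx.2.trans hz.2.symm) h)
    have hyz' : y.2 ≠ z.2 := fun h => hyz (Prod.ext (hy.2.trans hz.2.symm) h)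
    have hall : ∀ q ∈ Γ₃, q.1 = p.1 →
        (p.1, q.2) ∈ Γ ∧ ∀ u, ((![i₁, i₂, i₃] : Fin 3 → ℕ) u, q.2) ∈ Γ := fun q hq h =>
      ⟨by rw [← h]; exact s1 (s2 (s3 hq)), hrows q hq⟩
    refine ⟨![x.2, y.2, z.2], ?_, ?_⟩
    · exact injective_vec3 hxy' hxz' hyz'
    · intro v
      fin_cases v
      · exact hall x hx.1 hx.2
      · exact hall y hy.1 hy.2
      · exact hall z hz.1 hz.2

/-! ### The shift graph -/

/-- Among chords of an `n`-gon, all but few have a parallel chord nested inside whose endpoints are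
less than `K` steps away: chords with the same directed direction are nested, so `j - i` is strictly
monotone along them, and at most one chord without such a partner falls into each class of chords
with given direction, orientation and value of `⌊(j - i) / K⌋`. -/
lemma card_isolated_le {a : ℕ → Pt} {n : ℕ}
    (hne : ∀ i j, i < j → j < n → a i ≠ a j)
    (ho : ∀ i j k, i < j → j < k → k < n → 0 < orient (a i) (a j) (a k))
    {P : Finset (ℕ × ℕ)} (hP : ∀ p ∈ P, p.1 < p.2 ∧ p.2 < n) {K : ℕ} (hK : 0 < K)
    {S : Finset (Submodule ℝ Pt)} (hS : ∀ p ∈ P, Submodule.span ℝ {a p.2 - a p.1} ∈ S)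
    {B : Finset (ℕ × ℕ)} (hB : B ⊆ P)
    (hiso : ∀ p ∈ B, ∀ q ∈ P, p.1 < q.1 → q.2 < p.2 → q.1 < p.1 + K → p.2 < q.2 + K →
      cr (a p.1 - a p.2) (a q.1 - a q.2) ≠ 0) :
    B.card ≤ S.card * (2 * (n / K + 1)) := by
  classical
  let key : ℕ × ℕ → Submodule ℝ Pt × (Bool × ℕ) := fun p =>
    (Submodule.span ℝ {a p.2 - a p.1}, decide (LexPos (a p.2 - a p.1)), (p.2 - p.1) / K)
  have hT : (S ×ˢ ((Finset.univ : Finset Bool) ×ˢ Finset.range (n / K + 1))).card =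
      S.card * (2 * (n / K + 1)) := by
    simp
  rw [← hT]
  refine Finset.card_le_card_of_injOn key ?_ ?_
  · intro p hp
    have hp' := hP p (hB hp)
    simp only [key, Finset.coe_product, Set.mem_prod, Finset.mem_coe, Finset.mem_univ, true_and,
      Finset.mem_range]
    exact ⟨hS p (hB hp), Nat.lt_succ_of_le (Nat.div_le_div_right (by omega))⟩
  · have main : ∀ p ∈ B, ∀ q ∈ B, key p = key q →
        (p.1 < q.1 ∨ (p.1 = q.1 ∧ p.2 ≠ q.2)) → False := by
      intro p hp q hq hk hlt
      obtain ⟨hp1, hp2⟩ := hP p (hB hp)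
      obtain ⟨hq1, hq2⟩ := hP q (hB hq)
      simp only [key, Prod.mk.injEq, decide_eq_decide] at hk
      obtain ⟨k1, k2, k3⟩ := hk
      obtain ⟨r, hr, h⟩ := same_ray (sub_ne_zero.2 (hne _ _ hp1 hp2).symm)
        (sub_ne_zero.2 (hne _ _ hq1 hq2).symm) k1 k2
      obtain ⟨l1, l2⟩ := nested_of_parallel ho hp1 hp2 hq1 hq2 hlt hr h
      have e1 := Nat.div_add_mod (p.2 - p.1) K
      have e2 := Nat.div_add_mod (q.2 - q.1) K
      have e3 := Nat.mod_lt (p.2 - p.1) hK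
      rw [k3] at e1
      refine hiso p hp q (hB hq) l1 l2 (by omega) (by omega) ?_
      have h' : a q.1 - a q.2 = r • (a p.1 - a p.2) := by
        rw [← neg_sub (a q.2), h, ← smul_neg, neg_sub]
      rw [h']
      simp only [cr, Prod.smul_fst, Prod.smul_snd, smul_eq_mul]; ring
    intro p hp q hq hk
    by_contra hpq
    rcases lt_trichotomy p.1 q.1 with h | h | h
    · exact main p hp q hq hk (Or.inl h)
    · exact main p hp q hq hk (Or.inr ⟨h, fun h2 => hpq (Prod.ext h h2)⟩)
    · exact main q hq p hp hk.symm (Or.inl h)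

/-- Pigeonhole on the displacement of the parallel partner and on the residues of the endpoints. -/
lemma exists_shift_graph {a : ℕ → Pt} {n : ℕ} {P : Finset (ℕ × ℕ)}
    (hP : ∀ p ∈ P, p.1 < p.2 ∧ p.2 < n) {K : ℕ} (hK : 0 < K)
    {G : Finset (ℕ × ℕ)} (hG : G ⊆ P)
    (hpart : ∀ p ∈ G, ∃ q ∈ P, p.1 < q.1 ∧ q.2 < p.2 ∧ q.1 < p.1 + K ∧ p.2 < q.2 + K ∧
      cr (a p.1 - a p.2) (a q.1 - a q.2) = 0) :
    ∃ (s t x y : ℕ) (Γ : Finset (ℕ × ℕ)), Γ ⊆ G ∧ (G.card : ℝ) ≤ (K : ℝ) ^ 4 * Γ.card ∧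
      s < K ∧ t < K ∧
      ∀ p ∈ Γ, 0 < s ∧ 0 < t ∧ p.1 % K = x ∧ p.2 % K = y ∧ p.1 + s < n ∧ t ≤ p.2 ∧
        meet (a p.1) (a (p.1 + s)) (a p.2) (a (p.2 - t)) = 0 := by
  classical
  choose! f hf using hpart
  let col : ℕ × ℕ → (ℕ × ℕ) × (ℕ × ℕ) := fun p =>
    (((f p).1 - p.1, p.2 - (f p).2), (p.1 % K, p.2 % K))
  let T := (Finset.range K ×ˢ Finset.range K) ×ˢ (Finset.range K ×ˢ Finset.range K)
  have hTc : T.card = K ^ 4 := by simp [T]; ring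
  have hTne : T.Nonempty := by
    rw [← Finset.card_pos, hTc]; positivity
  have hmap : ∀ p ∈ G, col p ∈ T := by
    intro p hp
    obtain ⟨-, h1, h2, h3, h4, -⟩ := hf p hp
    simp only [col, T, Finset.mem_product, Finset.mem_range]
    exact ⟨⟨by omega, by omega⟩, Nat.mod_lt _ hK, Nat.mod_lt _ hK⟩
  have hsum : ∑ c ∈ T, ((G.filter fun p => col p = c).card : ℝ) = G.card := by
    rw [Finset.card_eq_sum_card_fiberwise hmap]; push_cast; rfl
  obtain ⟨⟨⟨s, t⟩, x, y⟩, hc, hle⟩ : ∃ c ∈ T, (G.card : ℝ) / (K : ℝ) ^ 4 ≤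
      ((G.filter fun p => col p = c).card : ℝ) := by
    apply Finset.exists_le_of_sum_le hTne
    rw [hsum, Finset.sum_const, hTc, nsmul_eq_mul]
    push_cast
    have : (0 : ℝ) < K := by exact_mod_cast hK
    rw [mul_div_cancel₀ _ (by positivity)]
  simp only [T, Finset.mem_product, Finset.mem_range] at hc
  refine ⟨s, t, x, y, G.filter fun p => col p = ((s, t), x, y), Finset.filter_subset _ _, ?_, hc.1.1, hc.1.2, ?_⟩
  · have : (0 : ℝ) < K := by exact_mod_cast hK
    rwa [div_le_iff₀' (by positivity)] at hle
  · intro p hp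
    obtain ⟨hpG, hcol⟩ := Finset.mem_filter.1 hp
    obtain ⟨h0, h1, h2, h3, h4, h5⟩ := hf p hpG
    have hp' := hP p (hG hpG)
    have hq' := hP _ h0
    simp only [col, Prod.mk.injEq] at hcol
    obtain ⟨⟨rfl, rfl⟩, hx, hy⟩ := hcol
    refine ⟨by omega, by omega, hx, hy, by omega, by omega, ?_⟩
    have e1 : p.1 + ((f p).1 - p.1) = (f p).1 := by omega
    have e2 : p.2 - (p.2 - (f p).2) = (f p).2 := by omega
    rw [e1, e2]
    exact h5

lemma add_le_of_mod_eq {i j K s : ℕ} (hs : s < K) (h : i % K = j % K) (hij : i ≠ j) :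
    i + s ≤ j ∨ j + s ≤ i := by
  have e1 := Nat.div_add_mod i K
  have e2 := Nat.div_add_mod j K
  have hne : i / K ≠ j / K := fun h' => hij (by rw [← e1, ← e2, h, h'])
  rcases lt_or_gt_of_ne hne with h' | h'
  · left
    have := Nat.mul_le_mul_left K (Nat.succ_le_of_lt h')
    rw [Nat.mul_succ] at this
    omega
  · right
    have := Nat.mul_le_mul_left K (Nat.succ_le_of_lt h')
    rw [Nat.mul_succ] at this
    omega

lemma orient_ne_zero {a : ℕ → Pt} {n : ℕ}
    (ho : ∀ i j k, i < j → j < k → k < n → 0 < orient (a i) (a j) (a k)) {i j k : ℕ}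
    (hi : i < n) (hj : j < n) (hk : k < n) (hij : i ≠ j) (hik : i ≠ k) (hjk : j ≠ k) :
    orient (a i) (a j) (a k) ≠ 0 := by
  have swap : ∀ p q r, orient p q r = - orient p r q := fun p q r => by
    simp only [orient, cr]; ring
  have rot : ∀ p q r, orient p q r = orient q r p := fun p q r => by
    simp only [orient, cr, Prod.fst_sub, Prod.snd_sub]; ring
  rcases lt_or_gt_of_ne hij with h1 | h1 <;> rcases lt_or_gt_of_ne hik with h2 | h2 <;>
    rcases lt_or_gt_of_ne hjk with h3 | h3 <;> try omega
  · exact (ho _ _ _ h1 h3 hk).ne'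
  · rw [swap, neg_ne_zero]; exact (ho _ _ _ h2 h3 hj).ne'
  · rw [rot, rot]; exact (ho _ _ _ h2 h1 hj).ne'
  · rw [rot, swap, neg_ne_zero]; exact (ho _ _ _ h1 h2 hk).ne'
  · rw [rot]; exact (ho _ _ _ h3 h2 hi).ne'
  · rw [swap, neg_ne_zero, rot]; exact (ho _ _ _ h3 h1 hi).ne'

/-- In the shift graph the pairs `(i, i + s)` and `(j, j - t)` give two families of pairwise skew
lines of `ℝ³`; three lines of the first family and three common transversals of the second one
determine a regulus, whose trace on `z = 0` is the required conic. -/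
lemma onConic_of_shift_graph {a : ℕ → Pt} {n : ℕ}
    (ho : ∀ i j k, i < j → j < k → k < n → 0 < orient (a i) (a j) (a k))
    {Γ Γ' : Finset (ℕ × ℕ)} (hP : ∀ p ∈ Γ, p.1 < p.2 ∧ p.2 < n)
    {K s t x y : ℕ} (hsK : s < K) (htK : t < K)
    (hΓ : ∀ p ∈ Γ, 0 < s ∧ 0 < t ∧ p.1 % K = x ∧ p.2 % K = y ∧ p.1 + s < n ∧ t ≤ p.2 ∧
        meet (a p.1) (a (p.1 + s)) (a p.2) (a (p.2 - t)) = 0)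
    {i : Fin 3 → ℕ} (hi : Function.Injective i) (hne : Γ'.Nonempty)
    (hΓ' : ∀ p ∈ Γ', (∀ u, (i u, p.2) ∈ Γ) ∧
        ∃ j : Fin 3 → ℕ, Function.Injective j ∧ ∀ v, (p.1, j v) ∈ Γ ∧ ∀ u, (i u, j v) ∈ Γ) :
    OnConic {b : Pt | ∃ p ∈ Γ', b = a p.1 ∨ b = a p.2} := by
  obtain ⟨p₀, hp₀⟩ := hne
  -- the lines `(a i, a (i + s))` are pairwise skew, and so are the lines `(a j, a (j - t))`
  have skewI : ∀ p ∈ Γ, ∀ q ∈ Γ, p.1 ≠ q.1 →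
      meet (a p.1) (a (p.1 + s)) (a q.1) (a (q.1 + s)) ≠ 0 := by
    intro p hp q hq hpq
    obtain ⟨p1, -, p3, -, p5, -, -⟩ := hΓ p hp
    obtain ⟨-, -, q3, -, q5, -, -⟩ := hΓ q hq
    exact meet_shift_ne ho p1 (add_le_of_mod_eq hsK (p3.trans q3.symm) hpq) p5 q5
  have skewJ : ∀ p ∈ Γ, ∀ q ∈ Γ, p.2 ≠ q.2 →
      meet (a p.2) (a (p.2 - t)) (a q.2) (a (q.2 - t)) ≠ 0 := by
    intro p hp q hq hpq
    obtain ⟨-, p2, -, p4, -, p6, -⟩ := hΓ p hp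
    obtain ⟨-, -, -, q4, -, q6, -⟩ := hΓ q hq
    have hp2 := (hP p hp).2
    have hq2 := (hP q hq).2
    rw [meet_swap, neg_ne_zero]
    have := meet_shift_ne ho p2 (i := p.2 - t) (j := q.2 - t)
      (by have := add_le_of_mod_eq htK (p4.trans q4.symm) hpq; omega) (by omega) (by omega)
    rwa [Nat.sub_add_cancel p6, Nat.sub_add_cancel q6] at this
  have hrow := (hΓ' p₀ hp₀).1
  have hlt : ∀ u, i u < n := fun u => by
    have := hP _ (hrow u); simp only at this; omega
  have horient : orient (a (i 0)) (a (i 1)) (a (i 2)) ≠ 0 := by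
    refine orient_ne_zero ho (hlt 0) (hlt 1) (hlt 2) ?_ ?_ ?_ <;> exact hi.ne (by decide)
  let F := regDet (a (i 0)) (a (i 0 + s)) (a (i 1)) (a (i 1 + s)) (a (i 2)) (a (i 2 + s))
  obtain ⟨c₀, c₁, c₂, c₃, c₄, c₅, hF⟩ := regDet_quadratic (a (i 0)) (a (i 0 + s)) (a (i 1))
    (a (i 1 + s)) (a (i 2)) (a (i 2 + s))
  refine onConic_of_quadratic F hF (regDet_ne_zero horient
    (skewI _ (hrow 0) _ (hrow 1) (hi.ne (by decide)))) ?_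
  rintro b ⟨p, hp, hb⟩
  obtain ⟨hcol, j, hj, hpj⟩ := hΓ' p hp
  have inc : ∀ q ∈ Γ, meet (a q.1) (a (q.1 + s)) (a q.2) (a (q.2 - t)) = 0 := fun q hq =>
    (hΓ q hq).2.2.2.2.2.2
  rcases hb with rfl | rfl
  · exact regDet_eq_zero_of_opposite (q' := a (p.1 + s)) (β := fun v => a (j v))
      (β' := fun v => a (j v - t))
      (fun v w hvw => skewJ _ (hpj v).1 _ (hpj w).1 (hj.ne hvw))
      (fun v => inc _ ((hpj v).2 0)) (fun v => inc _ ((hpj v).2 1))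
      (fun v => inc _ ((hpj v).2 2)) (fun v => inc _ (hpj v).1)
  · exact regDet_eq_zero_of_meet (q' := a (p.2 - t)) (inc _ (hcol 0)) (inc _ (hcol 1))
      (inc _ (hcol 2))

/-- Arithmetic of the choice `8 D / c ≤ K ≤ n`: the isolated chords are at most half of all. -/
lemma isolated_count {D c : ℝ} {n K S : ℕ} (hD : 0 < D) (hK : 0 < K) (hnK : K ≤ n)
    (hK1 : 8 * D ≤ c * K) (hS : (S : ℝ) ≤ D * n) :
    (S : ℝ) * (2 * ((n / K : ℕ) + 1)) ≤ c / 2 * (n : ℝ) ^ 2 := by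
  have hK0 : (0 : ℝ) < K := by exact_mod_cast hK
  have hnK' : (K : ℝ) ≤ n := by exact_mod_cast hnK
  have h2 : ((n / K : ℕ) : ℝ) ≤ n / K := Nat.cast_div_le
  have h6 : (n : ℝ) / K + 1 ≤ 2 * (n / K) := by
    have : 1 ≤ (n : ℝ) / K := by rwa [one_le_div hK0]
    linarith
  calc (S : ℝ) * (2 * ((n / K : ℕ) + 1)) ≤ D * n * (2 * (n / K + 1)) := by gcongr
    _ ≤ D * n * (2 * (2 * (n / K))) := by gcongr
    _ = 8 * D * ((n : ℝ) ^ 2 / (2 * K)) := by field_simp; ring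
    _ ≤ c * K * ((n : ℝ) ^ 2 / (2 * K)) := by gcongr
    _ = c / 2 * (n : ℝ) ^ 2 := by field_simp

/-- For every `D > 0`, `c > 0` there are `δ > 0` and `n₀` such that:
if `A` is an `n`-point set in convex position (`n ≥ n₀`) and `E` is a set of at least `c n²`
unordered pairs of distinct points of `A` determining at most `D n` distinct directions,
then there is a subset `H ⊆ E` with `|H| ≥ δ n²` such that all points occurring in the
pairs of `H` lie on one common (possibly degenerate) conic. -/
theorem statement10 (D c : ℝ) (hD : 0 < D) (hc : 0 < c) :
    ∃ (δ : ℝ) (n₀ : ℕ), 0 < δ ∧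
      ∀ n : ℕ, n₀ ≤ n →
      ∀ A : Finset Pt, A.card = n → ConvexPosition A →
      ∀ E : Finset (Finset Pt),
        (∀ e ∈ E, e.card = 2 ∧ e ⊆ A) →
        c * (n : ℝ) ^ 2 ≤ (E.card : ℝ) →
        ((directionsOf E).ncard : ℝ) ≤ D * (n : ℝ) →
        ∃ H : Finset (Finset Pt), H ⊆ E ∧ δ * (n : ℝ) ^ 2 ≤ (H.card : ℝ) ∧
          OnConic {p : Pt | ∃ e ∈ H, p ∈ e} := by
  classical
  -- `K` and `n` at least `8 D / c` make the isolated chords fewer than half of all chords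
  obtain ⟨K, hK, hK1⟩ : ∃ K : ℕ, 0 < K ∧ 8 * D ≤ c * K := by
    refine ⟨⌈8 * D / c⌉₊ + 1, Nat.succ_pos _, ?_⟩
    rw [← div_le_iff₀' hc]
    exact (Nat.le_ceil _).trans (by simp)
  have hK0 : (0 : ℝ) < K := by exact_mod_cast hK
  obtain ⟨δ, hδ, N, hN⟩ := exists_three_rows (η := c / (2 * (K : ℝ) ^ 4)) (by positivity)
  refine ⟨δ, max N K, hδ, ?_⟩
  intro n hn A hAn hA E hE hEc hDir
  obtain ⟨hnN, hnK⟩ := max_le_iff.1 hn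
  have hnK' : (K : ℝ) ≤ n := by exact_mod_cast hnK
  have hn0 : (0 : ℝ) < n := hK0.trans_le hnK'
  obtain ⟨a, ha1, ha2, hne, ho⟩ := hA.exists_enum
  rw [hAn] at ha1 ha2 hne ho
  have hinj : ∀ i < n, ∀ j < n, a i = a j → i = j := by
    intro i hi j hj h
    rcases lt_trichotomy i j with hij | hij | hij
    · exact absurd h (hne i j hij hj)
    · exact hij
    · exact absurd h.symm (hne j i hij hi)
  -- the chords of `E` as pairs of indices
  let ch : ℕ × ℕ → Finset Pt := fun p => {a p.1, a p.2}
  let P := (Finset.range n ×ˢ Finset.range n).filter fun p => p.1 < p.2 ∧ ch p ∈ E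
  have hP : ∀ p ∈ P, p.1 < p.2 ∧ p.2 < n := fun p hp => by
    simp only [P, Finset.mem_filter, Finset.mem_product, Finset.mem_range] at hp
    exact ⟨hp.2.1, hp.1.2⟩
  have hPE : ∀ p ∈ P, ch p ∈ E := fun p hp => (Finset.mem_filter.1 hp).2.2
  have hEP : E.card ≤ P.card := by
    refine le_trans (Finset.card_le_card ?_) (Finset.card_image_le (s := P) (f := ch))
    intro e he
    obtain ⟨h2, hsub⟩ := hE e he
    obtain ⟨x, y, hxy, rfl⟩ := Finset.card_eq_two.1 h2
    obtain ⟨i, hi, rfl⟩ := ha2 x (hsub (by simp))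
    obtain ⟨j, hj, rfl⟩ := ha2 y (hsub (by simp))
    rw [Finset.mem_image]
    rcases lt_trichotomy i j with h | rfl | h
    · exact ⟨(i, j), by simp [P, ch, hi, hj, h, he], rfl⟩
    · exact absurd rfl hxy
    · refine ⟨(j, i), ?_, Finset.pair_comm _ _⟩
      simp only [P, ch, Finset.mem_filter, Finset.mem_product, Finset.mem_range]
      exact ⟨⟨hj, hi⟩, h, by rwa [Finset.pair_comm]⟩
  have hS : ∀ p ∈ P, Submodule.span ℝ {a p.2 - a p.1} ∈
      P.image fun p => Submodule.span ℝ {a p.2 - a p.1} := fun p hp =>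
    Finset.mem_image.2 ⟨p, hp, rfl⟩
  set S := P.image fun p => Submodule.span ℝ {a p.2 - a p.1}
  have hSc : S.card ≤ (directionsOf E).ncard := by
    rw [← Set.ncard_coe_finset]
    refine Set.ncard_le_ncard ?_ ?_
    · intro d hd
      obtain ⟨p, hp, rfl⟩ := Finset.mem_image.1 (Finset.mem_coe.1 hd)
      exact ⟨ch p, hPE p hp, a p.1, by simp [ch], a p.2, by simp [ch],
        hne _ _ (hP p hp).1 (hP p hp).2, rfl⟩
    · refine Set.Finite.subset (Finset.finite_toSet
        ((A ×ˢ A).image fun x : Pt × Pt => Submodule.span ℝ {x.2 - x.1})) ?_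
      rintro d ⟨e, he, p, hp, q, hq, -, rfl⟩
      have hsub := (hE e he).2
      exact Finset.mem_coe.2 (Finset.mem_image.2
        ⟨(p, q), Finset.mem_product.2 ⟨hsub hp, hsub hq⟩, rfl⟩)
  let good : ℕ × ℕ → Prop := fun p => ∃ q ∈ P, p.1 < q.1 ∧ q.2 < p.2 ∧ q.1 < p.1 + K ∧
    p.2 < q.2 + K ∧ cr (a p.1 - a p.2) (a q.1 - a q.2) = 0
  let G := P.filter good
  have hbad : (P.filter fun p => ¬ good p).card ≤ S.card * (2 * (n / K + 1)) := by
    refine card_isolated_le hne ho hP hK hS (Finset.filter_subset _ _) ?_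
    intro p hp q hq h1 h2 h3 h4 h5
    exact (Finset.mem_filter.1 hp).2 ⟨q, hq, h1, h2, h3, h4, h5⟩
  have hGc : c / 2 * (n : ℝ) ^ 2 ≤ G.card := by
    have hsum : G.card + (P.filter fun p => ¬ good p).card = P.card :=
      Finset.card_filter_add_card_filter_not _
    have h1 : (E.card : ℝ) ≤ G.card + S.card * (2 * ((n / K : ℕ) + 1)) := by
      exact_mod_cast hEP.trans (by omega)
    have h2 := isolated_count hD hK hnK hK1 (le_trans (by exact_mod_cast hSc) hDir)
    linarith
  obtain ⟨s, t, x, y, Γ, hΓG, hΓc, hsK, htK, hΓ⟩ := exists_shift_graph (a := a) hP hK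
    (Finset.filter_subset good P) (fun p hp => (Finset.mem_filter.1 hp).2)
  have hΓP : Γ ⊆ P := hΓG.trans (Finset.filter_subset _ _)
  obtain ⟨i, Γ', hi, hΓ'Γ, ⟨p₀, hp₀⟩, hδc, hΓ'⟩ := hN n hnN Γ
    (hΓP.trans (Finset.filter_subset _ _)) (by
      rw [div_mul_eq_mul_div, div_le_iff₀ (by positivity)]
      nlinarith)
  refine ⟨Γ'.image ch, ?_, ?_, ?_⟩
  · intro e he
    obtain ⟨p, hp, rfl⟩ := Finset.mem_image.1 he
    exact hPE p (hΓP (hΓ'Γ hp))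
  · rw [Finset.card_image_of_injOn]
    · exact hδc
    · intro p hp q hq h
      obtain ⟨p1, p2⟩ := hP p (hΓP (hΓ'Γ hp))
      obtain ⟨q1, q2⟩ := hP q (hΓP (hΓ'Γ hq))
      simp only [ch] at h
      have m1 : a p.1 ∈ ({a q.1, a q.2} : Finset Pt) := by rw [← h]; simp
      have m2 : a p.2 ∈ ({a q.1, a q.2} : Finset Pt) := by rw [← h]; simp
      simp only [Finset.mem_insert, Finset.mem_singleton] at m1 m2
      have m1' : p.1 = q.1 ∨ p.1 = q.2 :=
        m1.imp (hinj _ (by omega) _ (by omega)) (hinj _ (by omega) _ (by omega))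
      have m2' : p.2 = q.1 ∨ p.2 = q.2 :=
        m2.imp (hinj _ (by omega) _ (by omega)) (hinj _ (by omega) _ (by omega))
      ext <;> omega
  obtain ⟨f, hf0, hfd, hf⟩ := onConic_of_shift_graph ho (fun p hp => hP p (hΓP hp)) hsK htK hΓ hi
    ⟨p₀, hp₀⟩ hΓ'
  refine ⟨f, hf0, hfd, ?_⟩
  rintro b ⟨e, he, hb⟩
  obtain ⟨p, hp, rfl⟩ := Finset.mem_image.1 he
  simp only [ch, Finset.mem_insert, Finset.mem_singleton] at hb
  exact hf b ⟨p, hp, hb⟩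
end

section
/- Let p(i,j), for i, j ∈ {0,1,2}, be nine pairwise distinct points of ℝ² such that for each i the three points p(i,0), p(i,1), p(i,2) are collinear and for each j the three points p(0,j), p(1,j), p(2,j) are collinear. Let σ be a permutation of {0,1,2} and suppose that the three points p(0,σ(0)), p(1,σ(1)), p(2,σ(2)) are collinear. Then the remaining six points (all p(i,j) with j ≠ σ(i)) lie on a common (possibly degenerate) conic, i.e., there is a nonzero real polynomial in two variables of total degree at most 2 vanishing at all six of them. -/
/-- The triple `(a, b, c)`, standing for the affine form `a * x + b * y + c`. -/
abbrev AffForm : Type := ℝ × ℝ × ℝ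

/-- The value of an affine form at a point. -/
def ev (l : AffForm) (x : Pt) : ℝ := l.1 * x.1 + l.2.1 * x.2 + l.2.2

/-- An affine form as a polynomial in two variables. -/
noncomputable def toPoly (l : AffForm) : MvPolynomial (Fin 2) ℝ :=
  MvPolynomial.C l.1 * MvPolynomial.X 0 + MvPolynomial.C l.2.1 * MvPolynomial.X 1 +
    MvPolynomial.C l.2.2

lemma eval_toPoly (l : AffForm) (x : Pt) :
    MvPolynomial.eval ![x.1, x.2] (toPoly l) = ev l x := by
  simp [toPoly, ev]

lemma totalDegree_toPoly (l : AffForm) : (toPoly l).totalDegree ≤ 1 := by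
  have h (a : ℝ) (i : Fin 2) :
      (MvPolynomial.C a * MvPolynomial.X i : MvPolynomial (Fin 2) ℝ).totalDegree ≤ 1 := by
    refine (MvPolynomial.totalDegree_mul _ _).trans ?_
    simp
  refine (MvPolynomial.totalDegree_add _ _).trans (max_le ?_ (by simp))
  exact (MvPolynomial.totalDegree_add _ _).trans (max_le (h _ _) (h _ _))

lemma totalDegree_toPoly_mul (l l' : AffForm) : (toPoly l * toPoly l').totalDegree ≤ 2 := by
  have h := MvPolynomial.totalDegree_mul (toPoly l) (toPoly l')
  have h1 := totalDegree_toPoly l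
  have h2 := totalDegree_toPoly l'
  omega

lemma toPoly_ne_zero {l : AffForm} (hl : l ≠ 0) : toPoly l ≠ 0 := by
  intro h
  have key (x : Pt) : ev l x = 0 := by rw [← eval_toPoly, h, map_zero]
  -- An affine form is determined by its values at these three points.
  have h0 := key (0, 0)
  have h1 := key (1, 0)
  have h2 := key (0, 1)
  simp only [ev] at h0 h1 h2
  apply hl
  ext <;> simp <;> linarith

lemma onConic_of_two_lines {S : Set Pt} {l l' : AffForm} (hl : l ≠ 0) (hl' : l' ≠ 0)
    (h : ∀ x ∈ S, ev l x = 0 ∨ ev l' x = 0) : OnConic S := by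
  refine ⟨toPoly l * toPoly l', mul_ne_zero (toPoly_ne_zero hl) (toPoly_ne_zero hl'),
    totalDegree_toPoly_mul l l', fun x hx => ?_⟩
  rw [map_mul, eval_toPoly, eval_toPoly]
  exact mul_eq_zero.2 (h x hx)

lemma onConic_of_sum {S : Set Pt} (m₀ m₁ m₂ : ℝ) (a₀ b₀ a₁ b₁ a₂ b₂ : AffForm) (y : Pt)
    (hy : m₀ * (ev a₀ y * ev b₀ y) + m₁ * (ev a₁ y * ev b₁ y) + m₂ * (ev a₂ y * ev b₂ y) ≠ 0)
    (h : ∀ x ∈ S,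
      m₀ * (ev a₀ x * ev b₀ x) + m₁ * (ev a₁ x * ev b₁ x) + m₂ * (ev a₂ x * ev b₂ x) = 0) :
    OnConic S := by
  have hev (x : Pt) : MvPolynomial.eval ![x.1, x.2]
      (m₀ • (toPoly a₀ * toPoly b₀) + m₁ • (toPoly a₁ * toPoly b₁) +
        m₂ • (toPoly a₂ * toPoly b₂)) =
      m₀ * (ev a₀ x * ev b₀ x) + m₁ * (ev a₁ x * ev b₁ x) + m₂ * (ev a₂ x * ev b₂ x) := by
    simp only [map_add, MvPolynomial.smul_eval, map_mul, eval_toPoly]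
  have hdeg (m : ℝ) (a b : AffForm) : (m • (toPoly a * toPoly b)).totalDegree ≤ 2 :=
    (MvPolynomial.totalDegree_smul_le _ _).trans (totalDegree_toPoly_mul a b)
  refine ⟨_, fun h0 => hy ?_, ?_, fun x hx => (hev x).trans (h x hx)⟩
  · rw [← hev, h0, map_zero]
  · refine (MvPolynomial.totalDegree_add _ _).trans (max_le ?_ (hdeg _ _ _))
    exact (MvPolynomial.totalDegree_add _ _).trans (max_le (hdeg _ _ _) (hdeg _ _ _))

lemma exists_form_of_collinear {x y z : Pt} (h : Collinear ℝ ({x, y, z} : Set Pt)) :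
    ∃ l : AffForm, l ≠ 0 ∧ ev l x = 0 ∧ ev l y = 0 ∧ ev l z = 0 := by
  obtain ⟨q, v, hv⟩ := (collinear_iff_exists_forall_eq_smul_vadd _).1 h
  obtain ⟨s, hs⟩ := hv x (by simp)
  obtain ⟨t, ht⟩ := hv y (by simp)
  obtain ⟨u, hu⟩ := hv z (by simp)
  by_cases h0 : v = 0
  · -- All three points equal `q`, so any line through `q` works.
    refine ⟨(1, 0, -q.1), by simp, ?_, ?_, ?_⟩ <;> simp [ev, hs, ht, hu, h0]
  · refine ⟨(v.2, -v.1, v.1 * q.2 - v.2 * q.1), fun h1 => h0 ?_, ?_, ?_, ?_⟩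
    · simp only [Prod.mk_eq_zero, neg_eq_zero] at h1
      exact Prod.ext h1.2.1 h1.1
    all_goals simp [ev, hs, ht, hu]; ring

/-- Two distinct points determine the form of the line through them up to a scalar. -/
lemma exists_smul_of_two_points {d e : AffForm} (hd : d ≠ 0) {x y : Pt} (hxy : x ≠ y)
    (hdx : ev d x = 0) (hdy : ev d y = 0) (hex : ev e x = 0) (hey : ev e y = 0) :
    ∃ m : ℝ, ∀ z, ev e z = m * ev d z := by
  obtain ⟨a, b, c⟩ := d
  obtain ⟨a', b', c'⟩ := e
  obtain ⟨x₁, x₂⟩ := x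
  obtain ⟨y₁, y₂⟩ := y
  simp only [ev] at *
  have hdet : a' * b = b' * a := by
    by_contra hne
    apply hxy
    have e1 : (a' * b - b' * a) * (x₁ - y₁) = 0 := by
      linear_combination b * hex - b * hey - b' * hdx + b' * hdy
    have e2 : (a' * b - b' * a) * (x₂ - y₂) = 0 := by
      linear_combination -a * hex + a * hey + a' * hdx - a' * hdy
    have hne' := sub_ne_zero.2 hne
    exact Prod.ext (sub_eq_zero.1 ((mul_eq_zero.1 e1).resolve_left hne'))
      (sub_eq_zero.1 ((mul_eq_zero.1 e2).resolve_left hne'))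
  by_cases ha : a = 0
  · by_cases hb : b = 0
    · subst ha hb
      exact absurd (by simpa using hdx) (by simpa using hd)
    · refine ⟨b' / b, fun z => ?_⟩
      field_simp
      linear_combination (z.1 - x₁) * hdet + b * hex - b' * hdx
  · refine ⟨a' / a, fun z => ?_⟩
    field_simp
    linear_combination -(z.2 - x₂) * hdet + a * hex - a' * hdx

lemma vanish_of_two_points {d e : AffForm} (hd : d ≠ 0) {x y z : Pt} (hxy : x ≠ y)
    (hdx : ev d x = 0) (hdy : ev d y = 0) (hex : ev e x = 0) (hey : ev e y = 0)
    (hz : ev d z = 0) : ev e z = 0 := by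
  obtain ⟨m, hm⟩ := exists_smul_of_two_points hd hxy hdx hdy hex hey
  rw [hm, hz, mul_zero]

/-- If the line of row `i` contains a diagonal point of another row, it is the diagonal line and
the line of both columns other than `i`, so it and column `i` cover all nine points. -/
lemma degenerate_case (p : Fin 3 → Fin 3 → Pt)
    (hdist : ∀ i j i' j' : Fin 3, p i j = p i' j' → i = i' ∧ j = j')
    (r c : Fin 3 → AffForm) (d : AffForm) (hr0 : ∀ i, r i ≠ 0) (hc0 : ∀ i, c i ≠ 0) (hd0 : d ≠ 0)
    (hr : ∀ i j, ev (r i) (p i j) = 0) (hc : ∀ i j, ev (c j) (p i j) = 0)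
    (hd : ∀ i, ev d (p i i) = 0) (i j : Fin 3) (hij : i ≠ j) (h : ev (r i) (p j j) = 0) :
    OnConic {x : Pt | ∃ i j : Fin 3, j ≠ i ∧ p i j = x} := by
  have hdiag (k : Fin 3) : ev (r i) (p k k) = 0 :=
    vanish_of_two_points hd0 (fun e => hij (hdist _ _ _ _ e).1) (hd i) (hd j) (hr i i) h (hd k)
  refine onConic_of_two_lines (hr0 i) (hc0 i) ?_
  rintro _ ⟨k, l, -, rfl⟩
  by_cases hl : l = i
  · right
    rw [hl]
    exact hc k i
  · left
    exact vanish_of_two_points (hc0 l) (fun e => hl (hdist _ _ _ _ e).1.symm) (hc i l) (hc l l)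
      (hr i l) (hdiag l) (hc k l)

/-- The form `r` is a combination of `c` and `d`, the three lines being concurrent at `x`. The
coefficient `k` is chosen so that `r - k * c` also vanishes at a second point `y` of `d`. -/
lemma exists_combination {r c d : AffForm} (hd0 : d ≠ 0) {x y : Pt} (hxy : x ≠ y)
    (hrx : ev r x = 0) (hcx : ev c x = 0) (hdx : ev d x = 0) (hdy : ev d y = 0)
    (hry : ev r y ≠ 0) (hcy : ev c y ≠ 0) :
    ∃ k m : ℝ, k ≠ 0 ∧ ∀ z, ev r z = k * ev c z + m * ev d z := by
  have hlin (k : ℝ) (z : Pt) : ev (r - k • c) z = ev r z - k * ev c z := by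
    simp [ev]
    ring
  obtain ⟨m, hm⟩ := exists_smul_of_two_points (e := r - (ev r y / ev c y) • c) hd0 hxy hdx hdy
    (by rw [hlin, hrx, hcx]; ring) (by rw [hlin]; field_simp; ring)
  refine ⟨ev r y / ev c y, m, div_ne_zero hry hcy, fun z => ?_⟩
  rw [← hm, hlin]
  ring

/-- The conic `Q`, written without rescaling the column forms: `c i` is replaced by `k i * c i`. -/
lemma generic_case (p : Fin 3 → Fin 3 → Pt) (r c : Fin 3 → AffForm) (d : AffForm)
    (hr : ∀ i j, ev (r i) (p i j) = 0) (hc : ∀ i j, ev (c j) (p i j) = 0)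
    (k m : Fin 3 → ℝ) (hk : ∀ i, k i ≠ 0)
    (hm : ∀ i z, ev (r i) z = k i * ev (c i) z + m i * ev d z)
    (hc1 : ev (c 1) (p 0 0) ≠ 0) (hc2 : ev (c 2) (p 0 0) ≠ 0) (h10 : ev (r 0) (p 1 0) ≠ 0) :
    OnConic {x : Pt | ∃ i j : Fin 3, j ≠ i ∧ p i j = x} := by
  have hm0 : m 0 ≠ 0 := by
    intro h0
    apply h10
    rw [hm, hc, h0]
    ring
  refine onConic_of_sum (m 0 * k 1 * k 2) (m 1 * k 2) (m 2) (c 1) (c 2) (r 0) (c 2) (r 0) (r 1)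
    (p 0 0) ?_ ?_
  · rw [hr 0 0]
    simp [hm0, hk, hc1, hc2]
  · rintro _ ⟨i, j, hij, rfl⟩
    have hri := hr i j
    have hcj := hc i j
    have e0 := hm 0 (p i j)
    have e1 := hm 1 (p i j)
    have e2 := hm 2 (p i j)
    generalize p i j = z at *
    fin_cases i <;> fin_cases j <;> simp at hij hri hcj ⊢ <;> grind

lemma diagonal_case (p : Fin 3 → Fin 3 → Pt)
    (hdist : ∀ i j i' j' : Fin 3, p i j = p i' j' → i = i' ∧ j = j')
    (r c : Fin 3 → AffForm) (d : AffForm) (hr0 : ∀ i, r i ≠ 0) (hc0 : ∀ i, c i ≠ 0) (hd0 : d ≠ 0)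
    (hr : ∀ i j, ev (r i) (p i j) = 0) (hc : ∀ i j, ev (c j) (p i j) = 0)
    (hd : ∀ i, ev d (p i i) = 0) :
    OnConic {x : Pt | ∃ i j : Fin 3, j ≠ i ∧ p i j = x} := by
  by_cases hR : ∃ i j, i ≠ j ∧ ev (r i) (p j j) = 0
  · obtain ⟨i, j, hij, h⟩ := hR
    exact degenerate_case p hdist r c d hr0 hc0 hd0 hr hc hd i j hij h
  by_cases hC : ∃ i j, i ≠ j ∧ ev (c i) (p j j) = 0
  · obtain ⟨i, j, hij, h⟩ := hC
    have ht := degenerate_case (fun i j => p j i) (fun i j i' j' e => (hdist _ _ _ _ e).symm)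
      c r d hc0 hr0 hd0 (fun i j => hc j i) (fun i j => hr j i) hd i j hij h
    convert ht using 1
    ext x
    exact ⟨fun ⟨i, j, h, e⟩ => ⟨j, i, h.symm, e⟩, fun ⟨i, j, h, e⟩ => ⟨j, i, h.symm, e⟩⟩
  push Not at hR hC
  by_cases h10 : ev (r 0) (p 1 0) = 0
  · have hcol0 (i : Fin 3) : ev (r 0) (p i 0) = 0 :=
      vanish_of_two_points (hc0 0) (fun e => absurd (hdist _ _ _ _ e).1 (by decide))
        (hc 0 0) (hc 1 0) (hr 0 0) h10 (hc i 0)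
    obtain ⟨l, hl0, hl1, hl2, -⟩ := exists_form_of_collinear (x := p 1 2) (y := p 2 1) (z := p 2 1)
      (by simpa using collinear_pair ℝ (p 1 2) (p 2 1))
    refine onConic_of_two_lines (hr0 0) hl0 ?_
    rintro _ ⟨i, j, hij, rfl⟩
    fin_cases i <;> fin_cases j <;>
      first
      | exact absurd rfl hij
      | exact Or.inl (hr 0 _)
      | exact Or.inl (hcol0 _)
      | exact Or.inr hl1
      | exact Or.inr hl2
  · have hcomb (i : Fin 3) :
        ∃ k m : ℝ, k ≠ 0 ∧ ∀ z, ev (r i) z = k * ev (c i) z + m * ev d z := by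
      have hne : i ≠ i + 1 := by fin_cases i <;> decide
      exact exists_combination hd0 (fun e => hne (hdist _ _ _ _ e).1) (hr i i) (hc i i) (hd i)
        (hd (i + 1)) (hR i (i + 1) hne) (hC i (i + 1) hne)
    choose k m hk hm using hcomb
    exact generic_case p r c d hr hc k m hk hm (hC 1 0 (by decide)) (hC 2 0 (by decide)) h10

/-- Given nine pairwise distinct points `p i j` of the plane whose rows
and columns are collinear, if a transversal `p 0 (σ 0), p 1 (σ 1), p 2 (σ 2)` (with `σ` a
permutation) is collinear, then the remaining six points lie on a common (possibly
degenerate) conic. -/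
theorem statement11 (p : Fin 3 → Fin 3 → Pt)
    (hdist : ∀ i j i' j' : Fin 3, p i j = p i' j' → i = i' ∧ j = j')
    (hrow : ∀ i : Fin 3, Collinear ℝ ({p i 0, p i 1, p i 2} : Set Pt))
    (hcol : ∀ j : Fin 3, Collinear ℝ ({p 0 j, p 1 j, p 2 j} : Set Pt))
    (σ : Equiv.Perm (Fin 3))
    (hdiag : Collinear ℝ ({p 0 (σ 0), p 1 (σ 1), p 2 (σ 2)} : Set Pt)) :
    OnConic {x : Pt | ∃ i j : Fin 3, j ≠ σ i ∧ p i j = x} := by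
  choose r hr0 hr using fun i => exists_form_of_collinear (hrow i)
  choose c hc0 hc using fun j => exists_form_of_collinear (hcol j)
  obtain ⟨d, hd0, hd⟩ := exists_form_of_collinear hdiag
  have hr' (i j : Fin 3) : ev (r i) (p i j) = 0 := by
    obtain ⟨h0, h1, h2⟩ := hr i
    fin_cases j <;> assumption
  have hc' (i j : Fin 3) : ev (c j) (p i j) = 0 := by
    obtain ⟨h0, h1, h2⟩ := hc j
    fin_cases i <;> assumption
  have hd' (i : Fin 3) : ev d (p i (σ i)) = 0 := by
    obtain ⟨h0, h1, h2⟩ := hd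
    fin_cases i <;> assumption
  have hmain := diagonal_case (fun i j => p i (σ j))
    (fun i j i' j' e => ⟨(hdist _ _ _ _ e).1, σ.injective (hdist _ _ _ _ e).2⟩)
    r (fun j => c (σ j)) d hr0 (fun j => hc0 (σ j)) hd0 (fun i j => hr' i (σ j))
    (fun i j => hc' i (σ j)) hd'
  convert hmain using 1
  ext x
  constructor
  · rintro ⟨i, j, h, e⟩
    exact ⟨i, σ.symm j, fun h' => h (by rw [← h', σ.apply_symm_apply]), by simpa using e⟩
  · rintro ⟨i, j, h, e⟩
    exact ⟨i, σ j, fun h' => h (σ.injective h'), e⟩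
end

section
/- Let (a₁,b₁), (a₂,b₂), (a₃,b₃) ∈ ℝ² with b₁ ≠ 0, b₂ ≠ 0, b₃ ≠ 0, and assume it is NOT the case that simultaneously b₁ = b₃, a₁·b₂ = a₂·b₁, and a₃ = a₁ − 2·(b₁/b₂) + 2. Then there exists a nonzero real polynomial f in two variables of total degree at most 2 such that f(x,y) = 0 for every point (x,y) ∈ ℝ² with y ∉ {0, 1, 2} having the property that the three lines — the line through (x/(1−y), 0) and (a₁,b₁), the line through (2x/(2−y), 0) and (a₂,b₂), and the line through ((x−y)/(1−y), 0) and (a₃,b₃) — have a common point. -/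
/-- Equation of the line through `(n / d, 0)` and `(a, b)`, with the denominator `d` cleared. -/
lemma line_equation {n d a b : ℝ} (hd : d ≠ 0) {z : Pt}
    (hz : z ∈ affineSpan ℝ ({(n / d, 0), (a, b)} : Set Pt)) :
    b * d * z.1 + (n - a * d) * z.2 - b * n = 0 := by
  obtain ⟨r, rfl⟩ := mem_affineSpan_pair_iff_exists_lineMap_eq.1 hz
  simp only [AffineMap.lineMap_apply, vsub_eq_sub, vadd_eq_add, Prod.fst_add, Prod.snd_add,
    Prod.smul_fst, Prod.smul_snd, Prod.fst_sub, Prod.snd_sub, smul_eq_mul]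
  field_simp
  ring

open MvPolynomial in
/-- The quadratic factor of the concurrency determinant, in the variables `x = X 0`, `y = X 1`;
the expression `1 - X 1` is the quantity `v = 1 - y`. -/
noncomputable def concurrencyQuadric (a₁ b₁ a₂ b₂ a₃ b₃ : ℝ) : MvPolynomial (Fin 2) ℝ :=
  C (-(b₂ * b₃)) * ((X 0 - C a₁ * (1 - X 1)) * (X 0 - (1 - X 1) - 1))
    - C (b₁ * b₃) * ((1 - X 1) * (C 2 * X 0 - C a₂ * ((1 - X 1) + 1)))
    + C (b₁ * b₂) * (X 0 * (X 0 - 1 + (1 - X 1) - C a₃ * (1 - X 1)))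

lemma eval_concurrencyQuadric (a₁ b₁ a₂ b₂ a₃ b₃ x y : ℝ) :
    MvPolynomial.eval ![x, y] (concurrencyQuadric a₁ b₁ a₂ b₂ a₃ b₃) =
      -(b₂ * b₃) * ((x - a₁ * (1 - y)) * (x - (1 - y) - 1))
        - b₁ * b₃ * ((1 - y) * (2 * x - a₂ * ((1 - y) + 1)))
        + b₁ * b₂ * (x * (x - 1 + (1 - y) - a₃ * (1 - y))) := by
  simp [concurrencyQuadric]

open MvPolynomial in
lemma totalDegree_concurrencyQuadric_le (a₁ b₁ a₂ b₂ a₃ b₃ : ℝ) :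
    (concurrencyQuadric a₁ b₁ a₂ b₂ a₃ b₃).totalDegree ≤ 2 := by
  have hadd {p q : MvPolynomial (Fin 2) ℝ} {n : ℕ} (hp : p.totalDegree ≤ n)
      (hq : q.totalDegree ≤ n) : (p + q).totalDegree ≤ n :=
    (totalDegree_add p q).trans (max_le hp hq)
  have hsub {p q : MvPolynomial (Fin 2) ℝ} {n : ℕ} (hp : p.totalDegree ≤ n)
      (hq : q.totalDegree ≤ n) : (p - q).totalDegree ≤ n :=
    (totalDegree_sub p q).trans (max_le hp hq)
  have hmul {p q : MvPolynomial (Fin 2) ℝ} (hp : p.totalDegree ≤ 1)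
      (hq : q.totalDegree ≤ 1) : (p * q).totalDegree ≤ 2 :=
    (totalDegree_mul p q).trans (add_le_add hp hq)
  have hC {p : MvPolynomial (Fin 2) ℝ} {n : ℕ} (c : ℝ) (hp : p.totalDegree ≤ n) :
      (C c * p).totalDegree ≤ n :=
    (totalDegree_mul (C c) p).trans (by simpa using hp)
  have hX (i : Fin 2) : (X i : MvPolynomial (Fin 2) ℝ).totalDegree ≤ 1 := by simp
  have h1 : (1 : MvPolynomial (Fin 2) ℝ).totalDegree ≤ 1 := by simp
  have hv := hsub h1 (hX 1)
  exact hadd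
    (hsub (hC _ (hmul (hsub (hX 0) (hC _ hv)) (hsub (hsub (hX 0) hv) h1)))
      (hC _ (hmul hv (hsub (hC _ (hX 0)) (hC _ (hadd hv h1))))))
    (hC _ (hmul (hX 0) (hsub (hadd (hsub (hX 0) h1) hv) (hC _ hv))))

/-- Let `(a₁,b₁), (a₂,b₂), (a₃,b₃)` be points with nonzero second
coordinates, not satisfying the degenerate conditions `b₁ = b₃`, `a₁ b₂ = a₂ b₁`,
`a₃ = a₁ − 2(b₁/b₂) + 2` simultaneously.  Then there is a nonzero polynomial of total
degree at most `2` vanishing at every `(x, y)` with `y ∉ {0, 1, 2}` for which the lines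
through `(x/(1−y), 0)` and `(a₁,b₁)`, through `(2x/(2−y), 0)` and `(a₂,b₂)`, and through
`((x−y)/(1−y), 0)` and `(a₃,b₃)` are concurrent. -/
theorem statement13 (a₁ b₁ a₂ b₂ a₃ b₃ : ℝ)
    (hb₁ : b₁ ≠ 0) (hb₂ : b₂ ≠ 0) (hb₃ : b₃ ≠ 0)
    (hdeg : ¬(b₁ = b₃ ∧ a₁ * b₂ = a₂ * b₁ ∧ a₃ = a₁ - 2 * (b₁ / b₂) + 2)) :
    ∃ f : MvPolynomial (Fin 2) ℝ, f ≠ 0 ∧ f.totalDegree ≤ 2 ∧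
      ∀ x y : ℝ, y ≠ 0 → y ≠ 1 → y ≠ 2 →
        (∃ z : Pt,
          z ∈ affineSpan ℝ ({(x / (1 - y), 0), (a₁, b₁)} : Set Pt) ∧
          z ∈ affineSpan ℝ ({(2 * x / (2 - y), 0), (a₂, b₂)} : Set Pt) ∧
          z ∈ affineSpan ℝ ({((x - y) / (1 - y), 0), (a₃, b₃)} : Set Pt)) →
        MvPolynomial.eval ![x, y] f = 0 := by
  refine ⟨concurrencyQuadric a₁ b₁ a₂ b₂ a₃ b₃, fun h => hdeg ?_,
    totalDegree_concurrencyQuadric_le .., ?_⟩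
  · have hev (x y : ℝ) := eval_concurrencyQuadric a₁ b₁ a₂ b₂ a₃ b₃ x y
    simp only [h, map_zero] at hev
    -- The points `(x, v) = (2, 0), (0, 1), (1, 1)` isolate the three conditions in turn.
    have h20 := hev 2 1
    have h01 := hev 0 0
    have h11 := hev 1 0
    have hb : b₁ = b₃ := mul_left_cancel₀ hb₂ (by linear_combination -h20 / 2)
    subst hb
    have ha : a₁ * b₂ = a₂ * b₁ := mul_left_cancel₀ hb₁ (by linear_combination h01 / 2)
    refine ⟨rfl, ha, ?_⟩
    field_simp
    exact mul_left_cancel₀ hb₁ (by linear_combination h11 - 2 * b₁ * ha)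
  · rintro x y hy0 hy1 hy2 ⟨z, hz1, hz2, hz3⟩
    have e1 := line_equation (sub_ne_zero.2 hy1.symm) hz1
    have e2 := line_equation (sub_ne_zero.2 hy2.symm) hz2
    have e3 := line_equation (sub_ne_zero.2 hy1.symm) hz3
    rw [eval_concurrencyQuadric]
    apply mul_left_cancel₀ hy0
    -- `(z.1, z.2, -1)` lies in the kernel of the matrix of the three lines; pairing the
    -- equations with the cofactors of its third column produces minus the determinant.
    linear_combination
      -(b₂ * (2 - y) * (x - y - a₃ * (1 - y)) - (2 * x - a₂ * (2 - y)) * (b₃ * (1 - y))) * e1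
      + (b₁ * (1 - y) * (x - y - a₃ * (1 - y)) - (x - a₁ * (1 - y)) * (b₃ * (1 - y))) * e2
      - (b₁ * (1 - y) * (2 * x - a₂ * (2 - y)) - (x - a₁ * (1 - y)) * (b₂ * (2 - y))) * e3
end

section
/- Let c ∈ ℝ with c ≠ 0 and c ≠ 1, let b₂ ≠ 0, and set a₁ = c·a₂, b₁ = c·b₂, b₃ = b₁, a₃ = a₁ − 2c + 2 for some a₂ ∈ ℝ. Then the point (2,0) lies on the line through (a₂,b₂) and (a₃,b₃); moreover, since (2,0) also lies on the line through (0,2) and (1,1), the triples ((0,1),(0,2),(1,1)) and ((a₁,b₁),(a₂,b₂),(a₃,b₃)) are similar relative to the x-axis. -/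
/-- The condition on one pair of corresponding sides: the lines through `p, q` and through
`p', q'` either meet in a point of `L`, or are both parallel to `L`. -/
def SideCond (L : AffineSubspace ℝ Pt) (p q p' q' : Pt) : Prop :=
  (∃ x : Pt, x ∈ L ∧ x ∈ affineSpan ℝ ({p, q} : Set Pt) ∧
      x ∈ affineSpan ℝ ({p', q'} : Set Pt)) ∨
  (AffineSubspace.Parallel (affineSpan ℝ ({p, q} : Set Pt)) L ∧
    AffineSubspace.Parallel (affineSpan ℝ ({p', q'} : Set Pt)) L)

/-- Two triples of pairwise distinct, non-collinear points are similar relative to a line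
`L` if each pair of corresponding sides satisfies `SideCond L`. -/
def SimilarTriples (L : AffineSubspace ℝ Pt) (p q r p' q' r' : Pt) : Prop :=
  p ≠ q ∧ q ≠ r ∧ p ≠ r ∧ ¬Collinear ℝ ({p, q, r} : Set Pt) ∧
  p' ≠ q' ∧ q' ≠ r' ∧ p' ≠ r' ∧ ¬Collinear ℝ ({p', q', r'} : Set Pt) ∧
  SideCond L p q p' q' ∧ SideCond L q r q' r' ∧ SideCond L p r p' r'

/-- The `x`-axis, as an affine subspace of the plane. -/
noncomputable def xAxis : AffineSubspace ℝ Pt :=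
  affineSpan ℝ ({((0 : ℝ), (0 : ℝ)), ((1 : ℝ), (0 : ℝ))} : Set Pt)

/-- Parametric criterion for membership in the line through two points, in coordinates. -/
lemma mem_line_of_param {p q x : Pt} (t : ℝ) (h₁ : x.1 = p.1 + t * (q.1 - p.1))
    (h₂ : x.2 = p.2 + t * (q.2 - p.2)) : x ∈ affineSpan ℝ ({p, q} : Set Pt) := by
  have hx : x = AffineMap.lineMap p q t := by
    ext
    · simp [AffineMap.lineMap_apply, h₁, add_comm]
    · simp [AffineMap.lineMap_apply, h₂, add_comm]
  rw [hx]
  exact AffineMap.lineMap_mem_affineSpan_pair t p q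

/-- Two points at equal height and a third at another height are not collinear. -/
lemma not_collinear_of_horizontal {p q r : Pt} (hpr : p.2 = r.2) (hne : p.1 ≠ r.1)
    (hq : q.2 ≠ p.2) : ¬Collinear ℝ ({p, q, r} : Set Pt) := by
  intro h
  obtain ⟨v, hv⟩ := (collinear_iff_of_mem (p₀ := p) (by simp)).1 h
  obtain ⟨s, hs⟩ := hv q (by simp)
  obtain ⟨t, ht⟩ := hv r (by simp)
  have hs₂ : q.2 = s * v.2 + p.2 := by simpa using congrArg Prod.snd hs
  have ht₁ : r.1 = t * v.1 + p.1 := by simpa using congrArg Prod.fst ht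
  have ht₂ : r.2 = t * v.2 + p.2 := by simpa using congrArg Prod.snd ht
  have htv : t * v.2 = 0 := by linarith
  rcases mul_eq_zero.1 htv with h0 | h0
  · apply hne
    rw [ht₁, h0]
    ring
  · apply hq
    rw [hs₂, h0]
    ring

lemma horizontal_parallel_xAxis {p q : Pt} (h : p.2 = q.2) (hne : p.1 ≠ q.1) :
    AffineSubspace.Parallel (affineSpan ℝ ({p, q} : Set Pt)) xAxis := by
  have hd : q.1 - p.1 ≠ 0 := sub_ne_zero.2 hne.symm
  have hv : q -ᵥ p = (q.1 - p.1) • (((1, 0) : Pt) -ᵥ ((0, 0) : Pt)) := by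
    ext <;> simp [h]
  rw [xAxis, AffineSubspace.affineSpan_pair_parallel_iff_vectorSpan_eq,
    vectorSpan_pair_rev, vectorSpan_pair_rev, hv]
  exact Submodule.span_singleton_smul_eq (IsUnit.mk0 _ hd) _

/-- Let `c ≠ 0, 1`, `b₂ ≠ 0`, `a₁ = c a₂`, `b₁ = c b₂`, `b₃ = b₁`,
`a₃ = a₁ − 2c + 2`.  Then `(2,0)` lies on the line through `(a₂,b₂)` and `(a₃,b₃)`;
moreover, since `(2,0)` also lies on the line through `(0,2)` and `(1,1)`, the triples
`((0,1),(0,2),(1,1))` and `((a₁,b₁),(a₂,b₂),(a₃,b₃))` are similar relative to the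
`x`-axis. -/
theorem statement14 (c a₂ b₂ : ℝ) (hc0 : c ≠ 0) (hc1 : c ≠ 1) (hb₂ : b₂ ≠ 0)
    (a₁ b₁ a₃ b₃ : ℝ) (ha₁ : a₁ = c * a₂) (hb₁ : b₁ = c * b₂)
    (hb₃ : b₃ = b₁) (ha₃ : a₃ = a₁ - 2 * c + 2) :
    ((2, 0) : Pt) ∈ affineSpan ℝ ({(a₂, b₂), (a₃, b₃)} : Set Pt) ∧
    ((2, 0) : Pt) ∈ affineSpan ℝ ({((0 : ℝ), (2 : ℝ)), ((1 : ℝ), (1 : ℝ))} : Set Pt) ∧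
    SimilarTriples xAxis (0, 1) (0, 2) (1, 1) (a₁, b₁) (a₂, b₂) (a₃, b₃) := by
  have hc : 1 - c ≠ 0 := sub_ne_zero.2 hc1.symm
  have hb : b₂ ≠ c * b₂ := by
    intro h
    have : (1 - c) * b₂ = 0 := by linarith
    exact (mul_ne_zero hc hb₂) this
  have ha : c * a₂ ≠ c * a₂ - 2 * c + 2 := by
    intro h
    apply hc
    linarith
  have hline : ((2, 0) : Pt) ∈
      affineSpan ℝ ({(a₂, b₂), (c * a₂ - 2 * c + 2, c * b₂)} : Set Pt) := by
    -- The parameter solves `b₂ + t * (c * b₂ - b₂) = 0`.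
    refine mem_line_of_param (1 / (1 - c)) ?_ ?_ <;> simp only <;> field_simp <;> ring
  have hline' : ((2, 0) : Pt) ∈ affineSpan ℝ ({((0 : ℝ), (2 : ℝ)), ((1 : ℝ), (1 : ℝ))} : Set Pt) :=
    mem_line_of_param 2 (by norm_num) (by norm_num)
  have haxis (x : ℝ) : ((x, 0) : Pt) ∈ xAxis := mem_line_of_param x (by simp) (by simp)
  subst hb₃ ha₃ hb₁ ha₁
  refine ⟨hline, hline', by simp, by simp, by simp, ?_, ?_, ?_, ?_, ?_, ?_, ?_, ?_⟩
  · exact not_collinear_of_horizontal rfl (by simp) (by simp)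
  · exact fun h => hb (congrArg Prod.snd h).symm
  · exact fun h => hb (congrArg Prod.snd h)
  · exact fun h => ha (congrArg Prod.fst h)
  · exact not_collinear_of_horizontal rfl ha hb
  · refine Or.inl ⟨(0, 0), haxis 0, mem_line_of_param (-1) (by norm_num) (by norm_num), ?_⟩
    -- The parameter solves `c + t * (1 - c) = 0`.
    refine mem_line_of_param (-c / (1 - c)) ?_ ?_ <;> simp only <;> field_simp <;> ring
  · exact Or.inl ⟨(2, 0), haxis 2, hline', hline⟩
  · exact Or.inr ⟨horizontal_parallel_xAxis rfl (by simp), horizontal_parallel_xAxis rfl ha⟩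
end

section
/- Let a₁, a₂, b₂ ∈ ℝ with a₁ ≠ 0, a₂ ≠ 0, a₁ ≠ a₂ and b₂ ≠ 0, and let b₁ satisfy a₁·b₂ = a₂·b₁; set b₃ = b₂ and a₃ = a₂ + a₂/a₁ − 1. Then the point (−1,0) lies on the line through (a₁,b₁) and (a₃,b₃); moreover, since (−1,0) also lies on the line through (0,1/2) and (1,1), the triples ((0,1/2),(0,1),(1,1)) and ((a₁,b₁),(a₂,b₂),(a₃,b₃)) are similar relative to the x-axis. -/
/-- A point with affine parameter `t` relative to two points lies on the line through them. -/
lemma mem_line_of_param_s16 {x y a b c d : ℝ} (t : ℝ) (hx : x = a + t * (c - a))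
    (hy : y = b + t * (d - b)) : ((x, y) : Pt) ∈ affineSpan ℝ ({(a, b), (c, d)} : Set Pt) := by
  have h := AffineMap.lineMap_mem_affineSpan_pair t ((a, b) : Pt) (c, d)
  convert h using 1
  simp only [AffineMap.lineMap_apply, vsub_eq_sub, vadd_eq_add, Prod.mk_sub_mk, Prod.smul_mk,
    smul_eq_mul, Prod.mk_add_mk, hx, hy]
  ext <;> ring

lemma horizontal_parallel_xAxis_s16 {a c y : ℝ} (h : a ≠ c) :
    (affineSpan ℝ ({(a, y), (c, y)} : Set Pt)).Parallel xAxis := by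
  rw [xAxis, AffineSubspace.affineSpan_pair_parallel_iff_vectorSpan_eq,
    vectorSpan_pair, vectorSpan_pair,
    Submodule.span_singleton_eq_span_singleton]
  refine ⟨(Units.mk0 (a - c) (sub_ne_zero.mpr h))⁻¹ * (-1), ?_⟩
  have h' := sub_ne_zero.mpr h
  simp [Units.smul_def, h']

lemma not_collinear_of_horizontal_s16 {a b c d y : ℝ} (h : c ≠ d) (hb : b ≠ y) :
    ¬Collinear ℝ ({(a, b), (c, y), (d, y)} : Set Pt) := by
  intro hc
  rw [collinear_iff_of_mem (p₀ := ((c, y) : Pt)) (by simp)] at hc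
  obtain ⟨⟨v, w⟩, hv⟩ := hc
  obtain ⟨r, hr⟩ := hv (a, b) (by simp)
  obtain ⟨s, hs⟩ := hv (d, y) (by simp)
  simp only [vadd_eq_add, Prod.smul_mk, smul_eq_mul, Prod.mk_add_mk, Prod.mk.injEq] at hr hs
  -- The displacement `s • (v, w)` between the horizontal pair has zero height but is nonzero.
  have hsw : s * w = 0 := by linarith [hs.2]
  rcases mul_eq_zero.mp hsw with h0 | h0
  · exact h (by rw [hs.1, h0]; ring)
  · exact hb (by rw [hr.2, h0]; ring)

/-- Let `a₁, a₂ ≠ 0`, `a₁ ≠ a₂`, `b₂ ≠ 0`, `a₁ b₂ = a₂ b₁`, `b₃ = b₂`,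
`a₃ = a₂ + a₂/a₁ − 1`.  Then `(−1,0)` lies on the line through `(a₁,b₁)` and `(a₃,b₃)`;
moreover, since `(−1,0)` also lies on the line through `(0,1/2)` and `(1,1)`, the triples
`((0,1/2),(0,1),(1,1))` and `((a₁,b₁),(a₂,b₂),(a₃,b₃))` are similar relative to the
`x`-axis. -/
theorem statement16 (a₁ a₂ b₂ : ℝ) (ha₁ : a₁ ≠ 0) (ha₂ : a₂ ≠ 0) (ha₁₂ : a₁ ≠ a₂)
    (hb₂ : b₂ ≠ 0) (b₁ a₃ b₃ : ℝ) (hb₁ : a₁ * b₂ = a₂ * b₁)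
    (hb₃ : b₃ = b₂) (ha₃ : a₃ = a₂ + a₂ / a₁ - 1) :
    ((-1, 0) : Pt) ∈ affineSpan ℝ ({(a₁, b₁), (a₃, b₃)} : Set Pt) ∧
    ((-1, 0) : Pt) ∈ affineSpan ℝ ({((0 : ℝ), (1 / 2 : ℝ)), ((1 : ℝ), (1 : ℝ))} : Set Pt) ∧
    SimilarTriples xAxis (0, 1 / 2) (0, 1) (1, 1) (a₁, b₁) (a₂, b₂) (a₃, b₃) := by
  subst hb₃
  have hd : a₁ - a₂ ≠ 0 := sub_ne_zero.mpr ha₁₂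
  have hb : b₁ = a₁ * b₃ / a₂ := by field_simp; linarith
  have hb₁₃ : b₁ ≠ b₃ := by
    rintro rfl
    exact ha₁₂ (mul_right_cancel₀ hb₂ hb₁)
  have ha₂₃ : a₂ ≠ a₃ := by
    intro h
    have h1 : a₂ / a₁ = 1 := by linarith
    exact ha₁₂ ((div_eq_one_iff_eq ha₁).mp h1).symm
  have hm : ((-1, 0) : Pt) ∈ affineSpan ℝ ({(a₁, b₁), (a₃, b₃)} : Set Pt) := by
    apply mem_line_of_param_s16 (a₁ / (a₁ - a₂))
    · rw [ha₃]; field_simp; ring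
    · rw [hb]; field_simp; ring
  have hm' : ((-1, 0) : Pt) ∈
      affineSpan ℝ ({((0 : ℝ), (1 / 2 : ℝ)), ((1 : ℝ), (1 : ℝ))} : Set Pt) :=
    mem_line_of_param_s16 (-1) (by norm_num) (by norm_num)
  refine ⟨hm, hm', by simp, by simp, by simp,
    not_collinear_of_horizontal_s16 (by norm_num) (by norm_num), by simp [hb₁₃], by simp [ha₂₃],
    by simp [hb₁₃], not_collinear_of_horizontal_s16 ha₂₃ hb₁₃, Or.inl ⟨(0, 0), ?_, ?_, ?_⟩,
    Or.inr ⟨horizontal_parallel_xAxis_s16 (by norm_num), horizontal_parallel_xAxis_s16 ha₂₃⟩,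
    Or.inl ⟨(-1, 0), ?_, hm', hm⟩⟩
  · exact mem_line_of_param_s16 0 (by norm_num) (by norm_num)
  · exact mem_line_of_param_s16 (-1) (by norm_num) (by norm_num)
  · apply mem_line_of_param_s16 (a₁ / (a₁ - a₂))
    · field_simp; ring
    · rw [hb]; field_simp; ring
  · exact mem_line_of_param_s16 (-1) (by norm_num) (by norm_num)
end
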